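/- arXiv:math/9910158 — 2 statements merged into one kernel-verified Lean document; each statement's English description precedes it below -/
import Mathlib

section
/- Vaught's two-cardinal theorem: let T be a countable first-order theory in a language containing a unary predicate symbol P. If for some infinite cardinal λ the theory T has a model M with |M| = λ⁺ and |P^M| = λ, then T has a model N with |N| = ℵ₁ and |P^N| = ℵ₀. -/
open FirstOrder Language Cardinal

/-!
Replacing the given model by an elementary submodel, assume that its size `κ` is regular and larger
than the size of `P`. Expanded by a well-order of type `κ`, it has least elements of nonempty
definable sets, and a definable family of bounded sets indexed by `P` has a bounded union.
Both properties are first order, so they pass to an ultrapower `U` over `ℕ`, which is moreover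
countably saturated.

Let `N` be a countable elementary submodel of `U`. If a function definable over `N` takes values in
`P` on an unbounded set definable over `N`, then one of its fibres is unbounded, and by elementarity
such a fibre lies over an element of `N`. Deciding the countably many functions one after another
along a decreasing sequence of unbounded definable sets, saturation yields an element `a`, outside
`N`, such that every element of `P` definable from `a` over `N` is already in `N`. The definable
closure of `N ∪ {a}` is an elementary submodel because definable sets have least elements, so `N`
has a proper elementary extension inside `U` with no new element of `P`. A maximal such extension
of a countable elementary submodel is therefore uncountable, and the downward Löwenheim–Skolem
theorem cuts it down to size `ℵ₁`.
-/

namespace TwoCardinal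

open Set Filter
open scoped SetRel

universe u v w z

/-! ### Definability with parameters -/

section Definability

variable {L : FirstOrder.Language.{u, v}} {M : Type w} [L.Structure M]
variable {A B : Set M} {S : Set M} {Q R : SetRel M M}

theorem definable_of_mem {α : Type*} (hS : A.Definable₁ L S) (i : α) :
    A.Definable L {v : α → M | v i ∈ S} :=
  Set.Definable.preimage_comp (fun _ : Fin 1 => i) hS

theorem definable_of_rel {α : Type*} (hR : A.Definable₂ L R) (i j : α) :
    A.Definable L {v : α → M | (v i, v j) ∈ R} :=
  Set.Definable.preimage_comp ![i, j] hR

theorem definable_of_exists {α : Type*} {p : (α → M) → M → Prop}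
    (hp : A.Definable L {v : α ⊕ Unit → M | p (v ∘ Sum.inl) (v (Sum.inr ()))}) :
    A.Definable L {v : α → M | ∃ x, p v x} := by
  convert! hp.exists_of_finite using 1
  ext v
  exact ⟨fun ⟨x, hx⟩ => ⟨fun _ => x, hx⟩, fun ⟨x, hx⟩ => ⟨x (), hx⟩⟩

theorem definable₂_inv (hR : A.Definable₂ L R) : A.Definable₂ L R.inv :=
  definable_of_rel hR 1 0

theorem definable₂_comp (hQ : A.Definable₂ L Q) (hR : A.Definable₂ L R) :
    A.Definable₂ L (Q ○ R) :=
  definable_of_exists <|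
    (definable_of_rel hQ (Sum.inl 0) (Sum.inr ())).inter
      (definable_of_rel hR (Sum.inr ()) (Sum.inl 1))

theorem definable₁_preimage (hR : A.Definable₂ L R) (hS : A.Definable₁ L S) :
    A.Definable₁ L (R.preimage S) :=
  definable_of_exists <|
    (definable_of_mem hS (Sum.inr ())).inter (definable_of_rel hR (Sum.inl 0) (Sum.inr ()))

theorem definable_of_definable₁_singleton {α : Type*} {X : Set (α → M)} (hX : B.Definable L X)
    (hB : ∀ b ∈ B, A.Definable₁ L {b}) : A.Definable L X := by
  obtain ⟨B₀, hB₀, hX⟩ := Set.definable_iff_finitely_definable.1 hX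
  obtain ⟨φ, rfl⟩ := Set.definable_iff_exists_formula_sum.1 hX
  have hφ : A.Definable L {v : α ⊕ B₀ → M | φ.Realize (v ∘ Sum.swap)} :=
    Set.Definable.mono (Set.empty_definable_iff.2 ⟨φ.relabel Sum.swap, by ext; simp⟩)
      (Set.empty_subset A)
  have hval : A.Definable L (⋂ b : B₀, {v : α ⊕ B₀ → M | v (Sum.inr b) = b}) :=
    Set.definable_iInter_of_finite fun b => definable_of_mem (hB b (hB₀ b.2)) (Sum.inr b)
  convert! (hφ.inter hval).exists_of_finite using 1
  ext v
  simp only [Set.mem_inter_iff, Set.mem_ofPred_eq, Set.mem_iInter, Sum.elim_inr, ← funext_iff,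
    exists_eq_right]
  exact iff_of_eq (congrArg φ.Realize Sum.elim_swap.symm)

theorem exists_definable₂_image_singleton {a : M} (hS : (insert a A).Definable₁ L S) :
    ∃ R : SetRel M M, A.Definable₂ L R ∧ R.image {a} = S := by
  classical
  obtain ⟨φ, hφ⟩ := Set.definable_iff_exists_formula_sum.1 hS
  let g : ((insert a A : Set M) : Type w) ⊕ Fin 1 → A ⊕ Fin 2 :=
    Sum.elim (fun c => if hc : (c : M) ∈ A then Sum.inl ⟨c, hc⟩ else Sum.inr 0) fun _ => Sum.inr 1
  refine ⟨{q | (φ.relabel g).Realize (Sum.elim Subtype.val ![q.1, q.2])}, ?_, ?_⟩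
  · refine Set.definable_iff_exists_formula_sum.2 ⟨φ.relabel g, ?_⟩
    ext v
    have hv : ![v 0, v 1] = v := by ext i; fin_cases i <;> rfl
    simp only [Set.mem_ofPred_eq, hv]
  · ext y
    have hg : Sum.elim Subtype.val ![a, y] ∘ g = Sum.elim Subtype.val fun _ => y := by
      ext (⟨c, rfl | hc⟩ | i)
      · by_cases hc : c ∈ A <;> simp [g, hc]
      · simp [g, hc]
      · simp [g]
    have hy : y ∈ S ↔ φ.Realize (Sum.elim Subtype.val fun _ => y) :=
      Set.ext_iff.1 hφ fun _ => y
    simp [hy, SetRel.image, hg]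

variable (L A) in
/-- The definable closure of `A`: the elements definable with parameters from `A`. -/
def dcl : Set M := {b | A.Definable₁ L {b}}

theorem subset_dcl : A ⊆ dcl L A :=
  fun _ hb => Set.Definable.singleton_of_mem L hb

theorem countable_setOf_definable₂ [Countable L.Symbols] (hA : A.Countable) :
    {R : Set (M × M) | A.Definable₂ L R}.Countable := by
  have := hA.to_subtype
  refine (countable_range fun φ : L[[A]].Formula (Fin 2) =>
    {p : M × M | φ.Realize ![p.1, p.2]}).mono ?_
  rintro R ⟨φ, hφ⟩
  exact ⟨φ, Set.ext fun p => (Set.ext_iff.1 hφ ![p.1, p.2]).symm⟩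

theorem meetsDefinable_sUnion {c : Set (Set M)} (hc : DirectedOn (· ⊆ ·) c) (hne : c.Nonempty)
    (h : ∀ N ∈ c, L.MeetsDefinable N) : L.MeetsDefinable (⋃₀ c) := by
  intro D hD hdef
  obtain ⟨B₀, hB₀, hdef⟩ := Set.definable_iff_finitely_definable.1 hdef
  obtain ⟨N, hN, hBN⟩ := DirectedOn.exists_mem_subset_of_finite_of_subset_sUnion hne hc
    B₀.finite_toSet hB₀
  exact (h N hN D hD (hdef.mono hBN)).mono (inter_subset_inter_right D (subset_sUnion_of_mem hN))

end Definability

/-! ### Definable properties of the order -/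

section Order

theorem lowerBounds_eq_compl_preimage {α : Type*} [LE α] (S : Set α) :
    lowerBounds S = (SetRel.preimage {p : α × α | p.1 ≤ p.2}ᶜ S)ᶜ := by
  ext
  simp [lowerBounds, SetRel.preimage]

theorem upperBounds_eq_compl_preimage {α : Type*} [LE α] (S : Set α) :
    upperBounds S = (SetRel.preimage (SetRel.inv {p : α × α | p.1 ≤ p.2})ᶜ S)ᶜ := by
  ext
  simp [upperBounds, SetRel.preimage, SetRel.inv]

variable {L : FirstOrder.Language.{u, v}} {M : Type w} [L.Structure M]
variable {A S : Set M} {R : SetRel M M}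

section LE

variable [LE M]

variable (L M) in
/-- Every nonempty subset of `M` that is definable with parameters has a least element. -/
def IsDefinablyWellOrdered : Prop :=
  ∀ S : Set M, univ.Definable₁ L S → S.Nonempty → ∃ b, IsLeast S b

variable (L) in
/-- Definable regularity of the order of `M` with respect to `P`: a definable family of bounded
sets indexed by `P` has a bounded union. -/
def IsDefinablyRegular (P : Set M) : Prop :=
  ∀ R : SetRel M M, univ.Definable₂ L R →
    (∀ y ∈ P, BddAbove (R.preimage {y})) → BddAbove (R.preimage P)

variable [L.IsOrdered] [L.OrderedStructure M]

theorem definable₂_le : A.Definable₂ L {p : M × M | p.1 ≤ p.2} := by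
  refine Set.Definable.mono (Set.empty_definable_iff.2
    ⟨(leSymb : L.Relations 2).formula₂ (Term.var 0) (Term.var 1), ?_⟩) (Set.empty_subset A)
  ext v
  simp [Formula.realize_rel₂]

theorem definable₁_lowerBounds (hS : A.Definable₁ L S) : A.Definable₁ L (lowerBounds S) :=
  lowerBounds_eq_compl_preimage S ▸
    Set.Definable.compl (definable₁_preimage (Set.Definable.compl definable₂_le) hS)

theorem definable₁_setOf_bddAbove_preimage (hR : A.Definable₂ L R) :
    A.Definable₁ L {y | BddAbove (R.preimage {y})} := by
  have hcomp : A.Definable₂ L (R.inv ○ {p | p.1 ≤ p.2}ᶜ)ᶜ :=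
    Set.Definable.compl (definable₂_comp (definable₂_inv hR) (Set.Definable.compl definable₂_le))
  have hdom : {y | BddAbove (R.preimage {y})} = (R.inv ○ {p | p.1 ≤ p.2}ᶜ)ᶜ.preimage univ := by
    ext y
    simp [BddAbove, upperBounds, SetRel.preimage, SetRel.comp, SetRel.inv, Set.Nonempty]
  exact hdom ▸ definable₁_preimage hcomp Set.definable_univ

end LE

theorem meetsDefinable_dcl [L.IsOrdered] [PartialOrder M] [L.OrderedStructure M]
    (hwo : IsDefinablyWellOrdered L M) : L.MeetsDefinable (dcl L A) := by
  intro S hne hS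
  obtain ⟨b, hb⟩ := hwo S (hS.mono (subset_univ _)) hne
  have hleast : S ∩ lowerBounds S = {b} :=
    Set.ext fun x => ⟨fun hx => (hb.unique hx).symm, fun hx => hx ▸ hb⟩
  have hdef : A.Definable₁ L (S ∩ lowerBounds S) :=
    definable_of_definable₁_singleton (Set.Definable.inter hS (definable₁_lowerBounds hS))
      fun _ h => h
  exact ⟨b, hb.1, (hleast ▸ hdef : A.Definable₁ L {b})⟩

theorem exists_unbounded_subset [L.IsOrdered] [Preorder M] [IsDirectedOrder M]
    [L.OrderedStructure M] {P N : Set M} (hreg : IsDefinablyRegular L P) (hN : L.MeetsDefinable N)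
    (hP : N.Definable₁ L P) (hS : N.Definable₁ L S) (hSu : ¬BddAbove S) (hR : N.Definable₂ L R) :
    ∃ S' ⊆ S, N.Definable₁ L S' ∧ ¬BddAbove S' ∧
      (Disjoint S' (R.preimage P) ∨ ∃ d ∈ P ∩ N, S' ⊆ R.preimage {d}) := by
  by_cases hb : BddAbove (S ∩ R.preimage P)
  · refine ⟨S \ R.preimage P, sdiff_subset, Set.Definable.sdiff hS (definable₁_preimage hR hP),
      fun hb' => hSu ?_, Or.inl disjoint_sdiff_left⟩
    exact inter_union_sdiff S (R.preimage P) ▸ hb.union hb'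
  · let Q : SetRel M M := {p | p ∈ R ∧ p.1 ∈ S}
    have hQ : N.Definable₂ L Q := Set.Definable.inter hR (definable_of_mem hS 0)
    have hQpre (T : Set M) : Q.preimage T = S ∩ R.preimage T := by
      ext x
      simp only [SetRel.preimage, Q, mem_inter_iff, mem_ofPred_eq]
      tauto
    obtain ⟨y, hyP, hy⟩ : ∃ y ∈ P, ¬BddAbove (Q.preimage {y}) := by
      by_contra! hcon
      exact hb (hQpre P ▸ hreg Q (hQ.mono (subset_univ _)) hcon)
    obtain ⟨d, ⟨hdP, hd⟩, hdN⟩ := hN (P ∩ {y | BddAbove (Q.preimage {y})}ᶜ) ⟨y, hyP, hy⟩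
      (Set.Definable.inter hP (Set.Definable.compl (definable₁_setOf_bddAbove_preimage hQ)))
    refine ⟨Q.preimage {d}, ?_, definable₁_preimage hQ (Set.Definable.singleton_of_mem L hdN), hd,
      Or.inr ⟨d, ⟨hdP, hdN⟩, ?_⟩⟩ <;> rw [hQpre]
    exacts [inter_subset_left, inter_subset_right]

end Order

/-! ### Extending a countable elementary submodel -/

section Extension

variable {L : FirstOrder.Language.{u, v}} {M : Type w} [L.Structure M]

variable (L M) in
/-- Every decreasing sequence of nonempty sets definable with parameters has nonempty
intersection; this amounts to `ℵ₁`-saturation when `L` is countable. -/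
def CountablySaturated : Prop :=
  ∀ S : ℕ → Set M, Antitone S → (∀ n, univ.Definable₁ L (S n)) → (∀ n, (S n).Nonempty) →
    (⋂ n, S n).Nonempty

/-- The Rasiowa–Sikorski lemma: `F` is the set of conditions and the sets `𝒟 i` are dense in it. -/
theorem CountablySaturated.exists_generic (hsat : CountablySaturated L M) {ι : Type*}
    [Countable ι] {F : Set (Set M)} (hne : F.Nonempty)
    (hF : ∀ S ∈ F, univ.Definable₁ L S ∧ S.Nonempty) (𝒟 : ι → Set (Set M))
    (h𝒟 : ∀ i, ∀ S ∈ F, ∃ S' ∈ F ∩ 𝒟 i, S' ⊆ S) : ∃ a, ∀ i, ∃ S ∈ F ∩ 𝒟 i, a ∈ S := by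
  have := Encodable.ofCountable ι
  let C : ι → Order.Cofinal Fᵒᵈ := fun i =>
    { carrier := {S | S.ofDual.1 ∈ 𝒟 i}
      isCofinal := fun S => by
        obtain ⟨S', hS', hle⟩ := h𝒟 i S.ofDual.1 S.ofDual.2
        exact ⟨OrderDual.toDual ⟨S', hS'.1⟩, hS'.2, hle⟩ }
  let s : ℕ → Fᵒᵈ := Order.sequenceOfCofinals (OrderDual.toDual ⟨_, hne.some_mem⟩) C
  obtain ⟨a, ha⟩ := hsat (fun n => (s n).ofDual.1) (Order.sequenceOfCofinals.monotone _ C)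
    (fun n => (hF _ (s n).ofDual.2).1) fun n => (hF _ (s n).ofDual.2).2
  exact ⟨a, fun i => ⟨_, ⟨(s _).ofDual.2, Order.sequenceOfCofinals.encode_mem _ C i⟩,
    mem_iInter.1 ha _⟩⟩

variable {N P : Set M} [Countable L.Symbols] [L.IsOrdered]

theorem exists_unbounded_generic [Preorder M] [IsDirectedOrder M] [L.OrderedStructure M]
    [NoTopOrder M] [Nonempty M] (hsat : CountablySaturated L M) (hreg : IsDefinablyRegular L P)
    (hP : N.Definable₁ L P) (hN : L.MeetsDefinable N) (hNc : N.Countable) :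
    ∃ a, ∀ R : SetRel M M, N.Definable₂ L R → a ∈ R.preimage P →
      ∃ d ∈ P ∩ N, a ∈ R.preimage {d} ∧ ¬BddAbove (R.preimage {d}) := by
  have := (countable_setOf_definable₂ (L := L) hNc).to_subtype
  obtain ⟨a, ha⟩ := hsat.exists_generic (F := {S | N.Definable₁ L S ∧ ¬BddAbove S})
    ⟨univ, Set.definable_univ, not_bddAbove_univ⟩
    (fun S hS => ⟨hS.1.mono (subset_univ _), nonempty_of_not_bddAbove hS.2⟩)
    (fun R : {R : Set (M × M) | N.Definable₂ L R} =>
      {S | Disjoint S (SetRel.preimage R.1 P) ∨ ∃ d ∈ P ∩ N, S ⊆ SetRel.preimage R.1 {d}})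
    (fun R S hS => by
      obtain ⟨S', hle, hdef, hu, h⟩ := exists_unbounded_subset hreg hN hP hS.1 hS.2 R.2
      exact ⟨S', ⟨⟨hdef, hu⟩, h⟩, hle⟩)
  refine ⟨a, fun R hR haR => ?_⟩
  obtain ⟨S, ⟨hS, hdisj | ⟨d, hd, hsub⟩⟩, haS⟩ := ha ⟨R, hR⟩
  · exact (disjoint_left.1 hdisj haS haR).elim
  · exact ⟨d, hd, hsub haS, fun hb => hS.2 (hb.mono hsub)⟩

variable [PartialOrder M] [IsDirectedOrder M] [L.OrderedStructure M] [NoTopOrder M]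

theorem exists_ssuperset_meetsDefinable (hsat : CountablySaturated L M)
    (hwo : IsDefinablyWellOrdered L M) (hreg : IsDefinablyRegular L P)
    (hP : N.Definable₁ L P) (hPne : P.Nonempty) (hN : L.MeetsDefinable N) (hNc : N.Countable) :
    ∃ N', L.MeetsDefinable N' ∧ N ⊂ N' ∧ P ∩ N' ⊆ N := by
  have : Nonempty M := hPne.to_type
  obtain ⟨a, ha⟩ := exists_unbounded_generic hsat hreg hP hN hNc
  have haN : a ∉ N := fun haN => by
    obtain ⟨y, hy⟩ := hPne
    obtain ⟨d, -, -, hd⟩ := ha {p | p.1 ∈ ({a} : Set M)}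
      (definable_of_mem (Set.Definable.singleton_of_mem L haN) 0) ⟨y, hy, rfl⟩
    exact hd (bddAbove_singleton.mono fun x ⟨_, _, hx⟩ => hx)
  refine ⟨dcl L (insert a N), meetsDefinable_dcl hwo,
    ssubset_of_ssubset_of_subset (ssubset_insert haN) subset_dcl, fun b ⟨hbP, hb⟩ => ?_⟩
  obtain ⟨R, hR, hRb⟩ := exists_definable₂_image_singleton hb
  have haR (y : M) : (a, y) ∈ R ↔ y = b := by
    rw [← mem_singleton_iff, ← hRb, SetRel.mem_image]
    simp
  obtain ⟨d, ⟨-, hdN⟩, ⟨_, rfl, hd⟩, -⟩ := ha R hR ⟨b, hbP, (haR b).2 rfl⟩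
  exact (haR _).1 hd ▸ hdN

theorem exists_uncountable_meetsDefinable (hsat : CountablySaturated L M)
    (hwo : IsDefinablyWellOrdered L M) (hreg : IsDefinablyRegular L P)
    {N₀ : Set M} (hP : N₀.Definable₁ L P) (hPne : P.Nonempty) (hN₀ : L.MeetsDefinable N₀) :
    ∃ N, L.MeetsDefinable N ∧ N₀ ⊆ N ∧ ¬N.Countable ∧ P ∩ N ⊆ N₀ := by
  obtain ⟨N, hsub, hmax⟩ := zorn_subset_nonempty {N | L.MeetsDefinable N ∧ P ∩ N ⊆ N₀}
    (fun c hcs hc hne => ⟨⋃₀ c, ⟨meetsDefinable_sUnion hc.directedOn hne fun N hN => (hcs hN).1,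
      fun b ⟨hbP, N, hN, hb⟩ => (hcs hN).2 ⟨hbP, hb⟩⟩, fun _ => subset_sUnion_of_mem⟩)
    N₀ ⟨hN₀, inter_subset_right⟩
  refine ⟨N, hmax.prop.1, hsub, fun hNc => ?_, hmax.prop.2⟩
  obtain ⟨N', hN', hlt, hPN'⟩ := exists_ssuperset_meetsDefinable hsat hwo hreg
    (hP.mono hsub) hPne hmax.prop.1 hNc
  exact hlt.not_subset <| hmax.le_of_ge ⟨hN', fun b hb => hmax.prop.2 ⟨hb.1, hPN' hb⟩⟩ hlt.subset

end Extension

/-! ### The interpretation of a unary predicate -/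

section Extent

variable {L : FirstOrder.Language.{u, v}}

/-- The interpretation `P^M` of a unary predicate symbol `P` in `M`. -/
def extent (P : L.Relations 1) (M : Type w) [L.Structure M] : Set M :=
  {x | Structure.RelMap P ![x]}

variable {M : Type w} [L.Structure M] {P : L.Relations 1}

theorem definable₁_extent : (∅ : Set M).Definable₁ L (extent P M) := by
  refine Set.empty_definable_iff.2 ⟨P.formula₁ (Term.var 0), ?_⟩
  ext v
  simp [Formula.realize_rel₁, extent]

theorem map_mem_extent_iff {N : Type*} [L.Structure N] {F : Type*} [FunLike F M N]
    [StrongHomClass L F M N] (f : F) {x : M} : f x ∈ extent P N ↔ x ∈ extent P M := by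
  have hcomp : f ∘ ![x] = ![f x] := funext (Fin.forall_fin_one.2 rfl)
  have hrel := StrongHomClass.map_rel f P ![x]
  rwa [hcomp] at hrel

theorem mk_extent_elementarySubstructure (P : L.Relations 1) (S : L.ElementarySubstructure M) :
    #(extent P S) = #(↑S ∩ extent P M : Set M) := by
  have himage : Subtype.val '' extent P S = ↑S ∩ extent P M := by
    rw [← Subtype.image_preimage_coe]
    exact congrArg _ (Set.ext fun x => (map_mem_extent_iff S.subtype).symm)
  rw [← himage, mk_image_eq Subtype.val_injective]

theorem exists_elementarySubstructure_mk_eq [Countable L.Symbols] {s : Set M} {κ : Cardinal.{w}}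
    (hκ : ℵ₀ ≤ κ) (hs : #s ≤ κ) (hM : κ ≤ #M) :
    ∃ S : L.ElementarySubstructure M, s ⊆ S ∧ #S = κ := by
  have hL : lift.{w} L.card ≤ lift.{max u v} κ :=
    (lift_le_aleph0.2 (mk_le_aleph0_iff.2 ‹_›)).trans (aleph0_le_lift.2 hκ)
  simpa only [lift_id] using
    exists_elementarySubstructure_card_eq L s κ hκ (lift_le.2 hs) hL (lift_le.2 hM)

theorem exists_elementarySubstructure_mk_extent_eq [Countable L.Symbols] {κ : Cardinal.{w}}
    (hκ : ℵ₀ ≤ κ) (hP : #(extent P M) ≤ κ) (hM : κ ≤ #M) :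
    ∃ S : L.ElementarySubstructure M, #S = κ ∧ #(extent P S) = #(extent P M) := by
  obtain ⟨S, hPS, hS⟩ := exists_elementarySubstructure_mk_eq (L := L) hκ hP hM
  exact ⟨S, hS, by rw [mk_extent_elementarySubstructure, inter_eq_right.2 hPS]⟩

theorem exists_uncountable_elementarySubstructure [Countable L.Symbols] [L.IsOrdered]
    [PartialOrder M] [IsDirectedOrder M] [L.OrderedStructure M] [NoTopOrder M]
    (hsat : CountablySaturated L M) (hwo : IsDefinablyWellOrdered L M)
    (hreg : IsDefinablyRegular L (extent P M))
    (hP : ℵ₀ ≤ #(extent P M)) :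
    ∃ E : L.ElementarySubstructure M, ℵ₀ < #E ∧ #(extent P E) = ℵ₀ := by
  obtain ⟨s, hsP, hs⟩ := le_mk_iff_exists_subset.1 hP
  obtain ⟨N₀, hsN₀, hN₀⟩ := exists_elementarySubstructure_mk_eq (L := L) le_rfl hs.le
    (hP.trans (mk_set_le _))
  have hPne : (extent P M).Nonempty :=
    nonempty_coe_sort.1 (mk_ne_zero_iff.1 (aleph0_pos.trans_le hP).ne')
  obtain ⟨N, hN, hN₀N, hNc, hPN⟩ := exists_uncountable_meetsDefinable hsat hwo hreg
    (definable₁_extent.mono (empty_subset _)) hPne N₀.meetsDefinable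
  have hE : (hN.toElementarySubstructure : Set M) = N := hN.closure_eq_self
  refine ⟨hN.toElementarySubstructure, ?_, ?_⟩
  · rwa [← not_le, ← SetLike.coe_sort_coe, hE, le_aleph0_iff_set_countable]
  · rw [mk_extent_elementarySubstructure, hE]
    exact le_antisymm ((mk_le_mk_of_subset (inter_comm N _ ▸ hPN)).trans_eq hN₀)
      (hs.symm.trans_le (mk_le_mk_of_subset (subset_inter (hsN₀.trans hN₀N) hsP)))

end Extent

/-! ### Ultraproducts -/

section Ultraproduct

variable {L : FirstOrder.Language.{u, v}} {ι : Type*} {M : ι → Type*} {𝒰 : Ultrafilter ι}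

/-- `S` is the internal subset of the ultraproduct given by the sets `s i`. -/
def IsInternal (s : ∀ i, Set (M i)) (S : Set ((𝒰 : Filter ι).Product M)) : Prop :=
  ∀ x : ∀ i, M i, (x : (𝒰 : Filter ι).Product M) ∈ S ↔ ∀ᶠ i in 𝒰, x i ∈ s i

/-- `R` is the internal relation on the ultraproduct given by the relations `r i`. -/
def IsInternalRel (r : ∀ i, SetRel (M i) (M i))
    (R : SetRel ((𝒰 : Filter ι).Product M) ((𝒰 : Filter ι).Product M)) : Prop :=
  ∀ x y : ∀ i, M i, ((x : (𝒰 : Filter ι).Product M), (y : (𝒰 : Filter ι).Product M)) ∈ R ↔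
    ∀ᶠ i in 𝒰, (x i, y i) ∈ r i

variable {s t : ∀ i, Set (M i)} {r : ∀ i, SetRel (M i) (M i)}
  {S T : Set ((𝒰 : Filter ι).Product M)}
  {R : SetRel ((𝒰 : Filter ι).Product M) ((𝒰 : Filter ι).Product M)}

theorem isInternal_singleton (x : ∀ i, M i) :
    IsInternal (fun i => {x i}) {(x : (𝒰 : Filter ι).Product M)} :=
  fun _ => Quotient.eq''

theorem IsInternal.compl (hS : IsInternal s S) : IsInternal (fun i => (s i)ᶜ) Sᶜ :=
  fun x => (not_congr (hS x)).trans Ultrafilter.eventually_not.symm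

theorem IsInternal.inter (hS : IsInternal s S) (hT : IsInternal t T) :
    IsInternal (fun i => s i ∩ t i) (S ∩ T) :=
  fun x => ((hS x).and (hT x)).trans eventually_and.symm

theorem IsInternalRel.compl (hR : IsInternalRel r R) : IsInternalRel (fun i => (r i)ᶜ) Rᶜ :=
  fun x y => (not_congr (hR x y)).trans Ultrafilter.eventually_not.symm

theorem IsInternalRel.inv (hR : IsInternalRel r R) : IsInternalRel (fun i => (r i).inv) R.inv :=
  fun x y => hR y x

section Nonempty

variable [∀ i, Nonempty (M i)]

theorem IsInternal.nonempty_iff (hS : IsInternal s S) :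
    S.Nonempty ↔ ∀ᶠ i in 𝒰, (s i).Nonempty :=
  Quotient.exists.trans <| (exists_congr hS).trans skolem.symm

theorem IsInternalRel.preimage (hR : IsInternalRel r R) (hS : IsInternal s S) :
    IsInternal (fun i => (r i).preimage (s i)) (R.preimage S) := fun x =>
  Quotient.exists.trans <|
    (exists_congr fun y => ((hS y).and (hR x y)).trans eventually_and.symm).trans
      (skolem (P := fun i b => b ∈ s i ∧ (x i, b) ∈ r i)).symm

section LE

variable [∀ i, LE (M i)] [LE ((𝒰 : Filter ι).Product M)]

theorem IsInternal.lowerBounds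
    (hS : IsInternal s S) (hle : IsInternalRel (fun i => {p : M i × M i | p.1 ≤ p.2})
      {p : (𝒰 : Filter ι).Product M × (𝒰 : Filter ι).Product M | p.1 ≤ p.2}) :
    IsInternal (fun i => lowerBounds (s i)) (lowerBounds S) := by
  simpa only [lowerBounds_eq_compl_preimage] using (hle.compl.preimage hS).compl

theorem IsInternal.bddAbove_iff
    (hS : IsInternal s S) (hle : IsInternalRel (fun i => {p : M i × M i | p.1 ≤ p.2})
      {p : (𝒰 : Filter ι).Product M × (𝒰 : Filter ι).Product M | p.1 ≤ p.2}) :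
    BddAbove S ↔ ∀ᶠ i in 𝒰, BddAbove (s i) := by
  have hub : IsInternal (fun i => upperBounds (s i)) (upperBounds S) := by
    simpa only [upperBounds_eq_compl_preimage] using
      (hle.inv.compl.preimage hS).compl
  exact hub.nonempty_iff

end LE

end Nonempty

variable [∀ i, L.Structure (M i)] [∀ i, Nonempty (M i)]

theorem relMap_product_iff {n : ℕ} (Q : L.Relations n) (x : Fin n → ∀ i, M i) :
    Structure.RelMap Q (fun j => (x j : (𝒰 : Filter ι).Product M)) ↔
      ∀ᶠ i in 𝒰, Structure.RelMap Q fun j => x j i :=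
  Ultraproduct.realize_formula_cast (Q.formula Term.var) x

theorem isInternal_extent (P : L.Relations 1) :
    IsInternal (fun i => extent P (M i)) (extent P ((𝒰 : Filter ι).Product M)) := fun x => by
  simpa only [extent, mem_ofPred_eq, Matrix.cons_fin_one] using!
    relMap_product_iff (𝒰 := 𝒰) P fun _ => x

theorem isInternalRel_le [L.IsOrdered] [∀ i, LE (M i)] [∀ i, L.OrderedStructure (M i)]
    [LE ((𝒰 : Filter ι).Product M)] [L.OrderedStructure ((𝒰 : Filter ι).Product M)] :
    IsInternalRel (fun i => {p : M i × M i | p.1 ≤ p.2})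
      {p : (𝒰 : Filter ι).Product M × (𝒰 : Filter ι).Product M | p.1 ≤ p.2} := fun x y => by
  let xy : Fin 2 → ∀ i, M i := ![x, y]
  let z : Fin 2 → (𝒰 : Filter ι).Product M := fun j => (xy j : (𝒰 : Filter ι).Product M)
  calc z 0 ≤ z 1
    _ ↔ Structure.RelMap (leSymb : L.Relations 2) z := (relMap_leSymb z).symm
    _ ↔ ∀ᶠ i in 𝒰, Structure.RelMap (leSymb : L.Relations 2) fun j => xy j i :=
      relMap_product_iff leSymb xy
    _ ↔ ∀ᶠ i in 𝒰, x i ≤ y i := eventually_congr <| .of_forall fun _ => relMap_leSymb _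

theorem exists_eventually_mem_iff {α : Type*} {X : Set (α → (𝒰 : Filter ι).Product M)}
    (hX : univ.Definable L X) :
    ∃ Y : ∀ i, Set (α → M i), (∀ i, univ.Definable L (Y i)) ∧ ∀ x : α → ∀ i, M i,
      (fun j => (x j : (𝒰 : Filter ι).Product M)) ∈ X ↔ ∀ᶠ i in 𝒰, (fun j => x j i) ∈ Y i := by
  obtain ⟨φ, rfl⟩ := Set.definable_iff_exists_formula_sum.1 hX
  choose c hc using fun q : (univ : Set ((𝒰 : Filter ι).Product M)) => Quotient.exists_rep q.1
  refine ⟨fun i => {v | φ.Realize (Sum.elim (fun q => c q i) v)}, fun i => ?_, fun x => ?_⟩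
  · refine Set.definable_iff_exists_formula_sum.2
      ⟨φ.relabel (Sum.map (fun q => ⟨c q i, mem_univ _⟩) id), ?_⟩
    ext v
    rw [mem_ofPred_eq, mem_ofPred_eq, Formula.realize_relabel, Sum.elim_comp_map]
    rfl
  · have hlos := Ultraproduct.realize_formula_cast (u := 𝒰) φ
      (Sum.elim c x : _ → ∀ i, M i)
    have hval : (fun j => ((Sum.elim c x : _ → ∀ i, M i) j : (𝒰 : Filter ι).Product M)) =
        Sum.elim Subtype.val fun j => (x j : (𝒰 : Filter ι).Product M) := by
      ext (q | j)
      exacts [hc q, rfl]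
    have hval' (i : ι) : (fun j => (Sum.elim c x : _ → ∀ i, M i) j i) =
        Sum.elim (fun q => c q i) fun j => x j i := by
      ext (q | j) <;> rfl
    rw [hval] at hlos
    simpa only [hval'] using! hlos

theorem exists_isInternal (hS : univ.Definable₁ L S) :
    ∃ s : ∀ i, Set (M i), (∀ i, univ.Definable₁ L (s i)) ∧ IsInternal s S := by
  obtain ⟨Y, hY, h⟩ := exists_eventually_mem_iff hS
  exact ⟨fun i => {x | (fun _ => x) ∈ Y i},
    fun i => (hY i).preimage_comp fun _ => 0, fun x => h fun _ => x⟩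

theorem exists_isInternalRel (hR : univ.Definable₂ L R) :
    ∃ r : ∀ i, SetRel (M i) (M i), (∀ i, univ.Definable₂ L (r i)) ∧ IsInternalRel r R := by
  obtain ⟨Y, hY, h⟩ := exists_eventually_mem_iff hR
  refine ⟨fun i => {p | ![p.1, p.2] ∈ Y i}, fun i => ?_, fun x y => ?_⟩
  · have heta (v : Fin 2 → M i) : ![v 0, v 1] = v := FinVec.etaExpand_eq v
    simpa only [Set.Definable₂, mem_ofPred_eq, heta] using! hY i
  · have hcomp (i : ι) : (fun j => (![x, y] : Fin 2 → ∀ i, M i) j i) = ![x i, y i] :=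
      funext (Fin.forall_fin_two.2 ⟨rfl, rfl⟩)
    simpa only [hcomp] using! h ![x, y]

section Order

variable [L.IsOrdered] [∀ i, LE (M i)] [∀ i, L.OrderedStructure (M i)]
  [LE ((𝒰 : Filter ι).Product M)] [L.OrderedStructure ((𝒰 : Filter ι).Product M)]

theorem IsDefinablyWellOrdered.product (hwo : ∀ i, IsDefinablyWellOrdered L (M i)) :
    IsDefinablyWellOrdered L ((𝒰 : Filter ι).Product M) := by
  intro S hS hne
  have hle := isInternalRel_le (L := L) (M := M) (𝒰 := 𝒰)
  obtain ⟨s, hs, hsS⟩ := exists_isInternal hS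
  exact (hsS.inter (hsS.lowerBounds hle)).nonempty_iff.2
    ((hsS.nonempty_iff.1 hne).mono fun i hi => hwo i (s i) (hs i) hi)

theorem IsDefinablyRegular.product {P : ∀ i, Set (M i)} {P' : Set ((𝒰 : Filter ι).Product M)}
    (hP : IsInternal P P') (hreg : ∀ i, IsDefinablyRegular L (P i)) :
    IsDefinablyRegular L P' := by
  intro R hR hbdd
  have hle := isInternalRel_le (L := L) (M := M) (𝒰 := 𝒰)
  obtain ⟨r, hr, hrR⟩ := exists_isInternalRel hR
  rw [(hrR.preimage hP).bddAbove_iff hle, ← not_not (a := Filter.Eventually _ _),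
    ← Ultrafilter.eventually_not]
  intro hunb
  obtain ⟨y, hy⟩ := skolem.1 <| hunb.mono fun i hi =>
    show ∃ y, y ∈ P i ∧ ¬BddAbove ((r i).preimage {y}) by
      contrapose! hi
      exact hreg i (r i) (hr i) hi
  refine Ultrafilter.eventually_not.1 (hy.mono fun i hi => hi.2)
    (((hrR.preimage (isInternal_singleton y)).bddAbove_iff hle).1
      (hbdd y ((hP y).2 (hy.mono fun i hi => hi.1))))

end Order

end Ultraproduct

section Ultrapower

variable {L : FirstOrder.Language.{u, v}} {M : Type w} [L.Structure M] {ι : Type*}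

theorem infinite_extent_product {𝒰 : Ultrafilter ι} [Nonempty M] (P : L.Relations 1)
    (hP : (extent P M).Infinite) : (extent P ((𝒰 : Filter ι).Product fun _ => M)).Infinite := by
  have hinj : Function.Injective
      fun a : M => ((fun _ => a : ι → M) : (𝒰 : Filter ι).Product fun _ => M) := fun _ _ hab =>
    const_eventuallyEq.1 (Quotient.eq''.1 hab)
  refine (hP.image hinj.injOn).mono ?_
  rintro _ ⟨a, ha, rfl⟩
  exact (isInternal_extent P fun _ => a).2 (.of_forall fun _ => ha)

theorem elementarilyEquivalent_ultrapower (𝒰 : Ultrafilter ι) [Nonempty M] :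
    (𝒰 : Filter ι).Product (fun _ => M) ≅[L] M :=
  elementarilyEquivalent_iff.2 fun φ =>
    (Ultraproduct.sentence_realize φ).trans eventually_const

end Ultrapower

theorem exists_forall_le_mem {α : Type*} [Nonempty α] {t : ℕ → Set α} (ht : Antitone t) (m : ℕ) :
    ∃ x, ∀ n ≤ m, (t n).Nonempty → x ∈ t n := by
  induction m with
  | zero =>
    by_cases h : (t 0).Nonempty
    · exact h.imp fun x hx n hn _ => ht hn hx
    · exact ⟨Classical.arbitrary α, fun n hn hne => (h (Nat.le_zero.1 hn ▸ hne)).elim⟩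
  | succ m ih =>
    by_cases h : (t (m + 1)).Nonempty
    · exact h.imp fun x hx n hn _ => ht hn hx
    · refine ih.imp fun x hx n hn hne => hx n (Nat.le_of_lt_succ (hn.lt_of_ne ?_)) hne
      rintro rfl
      exact h hne

theorem countablySaturated_product_hyperfilter {L : FirstOrder.Language.{u, v}} {M : ℕ → Type*}
    [∀ i, L.Structure (M i)] [∀ i, Nonempty (M i)] :
    CountablySaturated L ((hyperfilter ℕ : Filter ℕ).Product M) := by
  intro S hS hdef hne
  choose s _ hs using fun n => exists_isInternal (hdef n)
  let t (i n : ℕ) : Set (M i) := ⋂ k ≤ n, s k i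
  have ht (n : ℕ) : ∀ᶠ i in hyperfilter ℕ, (t i n).Nonempty := by
    obtain ⟨x, hx⟩ := Quotient.exists.1 (hne n)
    have hmem : ∀ᶠ i in hyperfilter ℕ, ∀ k ∈ Iic n, x i ∈ s k i :=
      (eventually_all_finite (finite_Iic n)).2 fun k hk => (hs k x).1 (hS hk hx)
    exact hmem.mono fun i hi => ⟨x i, mem_iInter₂.2 hi⟩
  -- Diagonalisation: in the factor of index `i` it suffices to meet the first `i` sets.
  choose x hx using fun i => exists_forall_le_mem (t := t i)
    (fun m n hmn => biInter_mono (fun k hk => le_trans hk hmn) fun _ _ => subset_rfl) i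
  refine ⟨x, mem_iInter.2 fun n => (hs n x).2 ?_⟩
  filter_upwards [(eventually_ge_atTop n).filter_mono Nat.hyperfilter_le_atTop, ht n] with i hi hne
  exact mem_iInter₂.1 (hx i n hi hne) n le_rfl

/-! ### Regular cardinals -/

section Regular

variable {M : Type w}

theorem exists_wellFoundedLT_cof_eq_mk (hM : (#M).IsRegular) :
    ∃ _ : LinearOrder M, WellFoundedLT M ∧ Order.cof M = #M := by
  obtain ⟨e⟩ := Cardinal.eq.1 (mk_ord_toType #M)
  let _ : LinearOrder M := LinearOrder.lift' e.symm e.symm.injective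
  let f : M ≃o (#M).ord.ToType := { e.symm with map_rel_iff' := Iff.rfl }
  refine ⟨inferInstance, f.toOrderEmbedding.wellFoundedLT, ?_⟩
  rw [f.cof_congr, Ordinal.cof_toType, hM.cof_ord]

variable {L : FirstOrder.Language.{u, v}} [L.Structure M]

theorem isDefinablyWellOrdered_of_wellFoundedLT [LinearOrder M] [WellFoundedLT M] :
    IsDefinablyWellOrdered L M := fun S _ hS =>
  ⟨wellFounded_lt.min S hS, wellFounded_lt.min_mem S hS, fun _ hx => wellFounded_lt.min_le hx⟩

theorem isDefinablyRegular_of_mk_lt_cof [LinearOrder M] {P : Set M} (hP : #P < Order.cof M) :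
    IsDefinablyRegular L P := by
  intro R _ hR
  choose! b hb using hR
  have hbP : ¬IsCofinal (b '' P) := fun h =>
    ((Order.cof_le h).trans mk_image_le).not_gt hP
  obtain ⟨c, hc⟩ := BddAbove.of_not_isCofinal hbP
  exact ⟨c, fun x ⟨y, hy, hxy⟩ => (hb y hy ⟨y, rfl, hxy⟩).trans (hc (mem_image_of_mem b hy))⟩

end Regular

/-! ### Models of type `(κ, μ)` -/

section HasModelOfType

variable {L : FirstOrder.Language.{u, v}} {T : L.Theory} {P : L.Relations 1}

/-- `T` has a model of type `(κ, μ)`: a model of size `κ` in which `P` has size `μ`. -/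
def HasModelOfType (T : L.Theory) (P : L.Relations 1) (κ μ : Cardinal.{w}) : Prop :=
  ∃ N : Theory.ModelType.{u, v, w} T, #N = κ ∧ #(extent P N) = μ

theorem HasModelOfType.of_lift_eq {κ κ' : Cardinal.{w}} {μ μ' : Cardinal.{z}}
    (h : HasModelOfType T P κ κ') (hκ : lift.{z} κ = lift.{w} μ)
    (hκ' : lift.{z} κ' = lift.{w} μ') : HasModelOfType T P μ μ' := by
  obtain ⟨N, rfl, rfl⟩ := h
  rw [← μ.mk_out] at hκ
  obtain ⟨e⟩ := lift_mk_eq'.1 hκ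
  let _ := e.inducedStructure (L := L)
  refine ⟨N.equivInduced e, μ.mk_out, ?_⟩
  rw [← lift_inj.{z, w}, ← hκ']
  exact (lift_mk_eq'.2 ⟨e.subtypeEquiv fun _ =>
    (map_mem_extent_iff (e.inducedStructureEquiv (L := L))).symm⟩).symm

theorem HasModelOfType.of_mem_Icc [Countable L.Symbols] {κ κ' μ : Cardinal.{w}}
    (h : HasModelOfType T P κ κ') (hμ : ℵ₀ ≤ μ) (hmem : μ ∈ Icc κ' κ) :
    HasModelOfType T P μ κ' := by
  obtain ⟨N, rfl, rfl⟩ := h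
  obtain ⟨S, hS, hPS⟩ := exists_elementarySubstructure_mk_extent_eq (L := L) hμ hmem.1 hmem.2
  exact ⟨.of T S, hS, hPS⟩

theorem hasModelOfType_aleph_one_of_mk_extent_lt_cof [Countable L.Symbols] [L.IsOrdered]
    {M : Type w} [L.Structure M] [M ⊨ T] [LinearOrder M] [WellFoundedLT M] [L.OrderedStructure M]
    (hinf : ℵ₀ ≤ #(extent P M)) (hcof : #(extent P M) < Order.cof M) :
    HasModelOfType T P (ℵ₁ : Cardinal.{w}) ℵ₀ := by
  have : Nonempty M := (mk_ne_zero_iff.1 (aleph0_pos.trans_le hinf).ne').map Subtype.val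
  have : NoTopOrder M :=
    Order.one_lt_cof_iff.1 (one_lt_aleph0.trans_le (hinf.trans hcof.le))
  let U := (hyperfilter ℕ : Filter ℕ).Product fun _ => M
  have hU : U ≅[L] M := elementarilyEquivalent_ultrapower _
  have : U ⊨ T := hU.theory_model_iff.2 ‹_›
  have : U ⊨ L.linearOrderTheory := hU.theory_model_iff.2 inferInstance
  classical
  let _ : LinearOrder U := L.linearOrderOfModels U
  have : NoTopOrder U :=
    realize_noTopOrder_iff.1 ((hU.realize_sentence _).2 (L.realize_noTopOrder M))
  have hwo : IsDefinablyWellOrdered L U :=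
    .product fun _ => isDefinablyWellOrdered_of_wellFoundedLT
  have hreg : IsDefinablyRegular L (extent P U) :=
    .product (isInternal_extent P) fun _ => isDefinablyRegular_of_mk_lt_cof hcof
  have hPinf : (extent P U).Infinite :=
    infinite_extent_product P (infinite_coe_iff.1 (infinite_iff.2 hinf))
  obtain ⟨E, hE, hPE⟩ := exists_uncountable_elementarySubstructure
    countablySaturated_product_hyperfilter hwo hreg (infinite_iff.1 hPinf.to_subtype)
  have hcard : HasModelOfType T P #E ℵ₀ := ⟨.of T E, rfl, hPE⟩
  exact hcard.of_mem_Icc (aleph0_le_aleph 1)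
    ⟨aleph0_le_aleph 1, succ_aleph0 ▸ Order.succ_le_of_lt hE⟩

instance countable_symbols_sum_order [Countable L.Symbols] :
    Countable (L.sum Language.order).Symbols := by
  refine mk_le_aleph0_iff.1 (?_ : (L.sum Language.order).card ≤ ℵ₀)
  rw [Language.card_sum, add_le_aleph0, Language.order.card_eq_one, lift_one, lift_le_aleph0]
  exact ⟨mk_le_aleph0_iff.2 ‹_›, one_le_aleph0⟩

theorem HasModelOfType.aleph_one_of_isRegular [Countable L.Symbols] {κ κ' : Cardinal.{w}}
    (h : HasModelOfType T P κ κ') (hκ : κ.IsRegular) (hinf : ℵ₀ ≤ κ') (hlt : κ' < κ) :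
    HasModelOfType T P (ℵ₁ : Cardinal.{w}) ℵ₀ := by
  obtain ⟨M, rfl, rfl⟩ := h
  obtain ⟨_, _, hcof⟩ := exists_wellFoundedLT_cof_eq_mk hκ
  let _ : Language.order.Structure M := orderStructure M
  have : (L.sum Language.order).OrderedStructure M := ⟨fun _ => Iff.rfl⟩
  let φ : L →ᴸ L.sum Language.order := LHom.sumInl
  have : M ⊨ φ.onTheory T := (LHom.onTheory_model φ T).2 inferInstance
  obtain ⟨N, hN, hPN⟩ := hasModelOfType_aleph_one_of_mk_extent_lt_cof (T := φ.onTheory T)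
    (P := φ.onRelation P) (M := M) hinf (hlt.trans_eq hcof.symm)
  exact ⟨N.reduct φ, hN, hPN⟩

theorem HasModelOfType.aleph_one [Countable L.Symbols] {κ κ' : Cardinal.{w}}
    (h : HasModelOfType T P κ κ') (hinf : ℵ₀ ≤ κ') (hlt : κ' < κ) :
    HasModelOfType T P (ℵ₁ : Cardinal.{w}) ℵ₀ :=
  have hsucc : HasModelOfType T P (Order.succ κ') κ' :=
    h.of_mem_Icc (hinf.trans (Order.le_succ κ')) ⟨Order.le_succ κ', Order.succ_le_of_lt hlt⟩
  hsucc.aleph_one_of_isRegular (isRegular_succ hinf) hinf (Order.lt_succ κ')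

end HasModelOfType

end TwoCardinal

open TwoCardinal in
theorem vaught_two_cardinal_general (L : FirstOrder.Language) (hL : Countable L.Symbols)
    (P : L.Relations 1) (T : L.Theory) (M : T.ModelType)
    (hinf : ℵ₀ ≤ Cardinal.mk {x : M // Structure.RelMap P ![x]})
    (hlt : Cardinal.mk {x : M // Structure.RelMap P ![x]} < Cardinal.mk M) :
    ∃ N : T.ModelType,
      Cardinal.mk N = Cardinal.aleph 1 ∧
      Cardinal.mk {x : N // Structure.RelMap P ![x]} = ℵ₀ := by
  have hM : HasModelOfType T P #M #(extent P M) := ⟨M, rfl, rfl⟩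
  exact (hM.aleph_one hinf hlt).of_lift_eq (by simp) (by simp)

/-- Vaught's two-cardinal theorem `(λ⁺, λ) → (ℵ₁, ℵ₀)`: if a countable theory `T`, in a
language with a unary predicate `P`, has a model of cardinality `λ⁺` in which `P` has
cardinality `λ`, then `T` has a model of cardinality `ℵ₁` in which `P` is countable. -/
theorem vaught_two_cardinal (L : FirstOrder.Language) (hL : Countable L.Symbols)
    (P : L.Relations 1) (T : L.Theory)
    (lam : Cardinal) (hlam : ℵ₀ ≤ lam)
    (M : T.ModelType)
    (hM : Cardinal.mk M = Order.succ lam)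
    (hP : Cardinal.mk {x : M // Structure.RelMap P ![x]} = lam) :
    ∃ N : T.ModelType,
      Cardinal.mk N = Cardinal.aleph 1 ∧
      Cardinal.mk {x : N // Structure.RelMap P ![x]} = ℵ₀ := by
  exact vaught_two_cardinal_general L hL P T M (hP ▸ hlam)
    ((hP.trans_lt (Order.lt_succ lam)).trans_eq hM.symm)
end

section
/- Chang's two-cardinal theorem: let μ be an infinite cardinal with μ = μ^{<μ}, and let T be a first-order theory of cardinality ≤ μ in a language with a unary predicate P. If for some infinite cardinal λ the theory T has a model M with |M| = λ⁺ and |P^M| = λ, then T has a model N with |N| = μ⁺ and |P^N| = μ. -/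
open FirstOrder Language Cardinal

/-!
Write `κ` for `μ` and let `M` be a model whose `P`-part has infinite cardinality `λ < |M|`. On
`κ⁺` there is an increasing `κ`-sequence of tree orders whose union is the linear order and in
which every element has fewer than `κ` predecessors. The type of an element at level `n` is the
isomorphism type of its initial segment, with all the tree orders up to the `n`-th one; as
`κ^{<κ} = κ`, each level has at most `κ` types. Colour a finite increasing sequence by the least
level at which it is a chain and the types of its elements at that level: this uses `κ` colours.

Iterate the quantifier `∃^{>λ} x`, there are more than `λ` elements `x` of `M`. Pigeonhole on the
`λ` elements of `P`, by induction on the level, turns such iterated quantifiers into assignments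
to any finite part of `κ⁺` of distinct elements of `M` for which finitely many given Skolem terms,
whenever their values are in `P`, have values that depend only on the form of the term and the
colour of its variables. In an ultraproduct of these assignments, all terms are controlled at
once, so the Skolem hull of the `κ⁺` resulting elements of an ultrapower of `M` meets `P` in at
most `κ` points; further `κ` variables with distinct values in `P` give equality.
-/

namespace TwoCardinal

universe u v w a b

/-! ### Coherent filtrations of a well-order by small tree orders -/

/-- An increasing family of partial orders `rel n`, for `n : N`, with union the linear order of
`I`, each of them a tree order in which every element has fewer than `κ` predecessors. -/
structure TreeFiltration (I N : Type u) [LinearOrder I] [LinearOrder N] (κ : Cardinal.{u}) where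
  rel : N → I → I → Prop
  refl : ∀ n a, rel n a a
  trans : ∀ {n a b c}, rel n a b → rel n b c → rel n a c
  le : ∀ {n a b}, rel n a b → a ≤ b
  coherent : ∀ {n a b c}, rel n a c → rel n b c → a ≤ b → rel n a b
  mono : ∀ {m n a b}, m ≤ n → rel m a b → rel n a b
  exhaust : ∀ {a b}, a ≤ b → ∃ n, rel n a b
  small : ∀ n b, #{a // rel n a b} < κ

section TreeRel

variable {I N : Type u} [LinearOrder I] [LinearOrder N] {e : I → I → N}

/-- The tree orders generated by `a < b` whenever `e b a ≤ n` and `TreeRel e n` is already linear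
on the elements `x < b` with `e b x ≤ e b a`. -/
inductive TreeRel (e : I → I → N) : N → I → I → Prop
  | refl (n : N) (a : I) : TreeRel e n a a
  | step {n : N} {a b c : I} (hab : a < b) (hn : e b a ≤ n)
      (hlin : ∀ x y, x ≤ y → y < b → e b x ≤ e b a → e b y ≤ e b a → TreeRel e n x y)
      (hca : TreeRel e n c a) : TreeRel e n c b

theorem TreeRel.le {n : N} {a b : I} (h : TreeRel e n a b) : a ≤ b := by
  induction h with
  | refl => exact le_rfl
  | step hab _ _ _ _ ih => exact ih.trans hab.le

theorem TreeRel.mono {m n : N} (hmn : m ≤ n) {a b : I} (h : TreeRel e m a b) :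
    TreeRel e n a b := by
  induction h with
  | refl => exact .refl _ _
  | step hab hn _ _ ihlin ih => exact .step hab (hn.trans hmn) ihlin ih

theorem TreeRel.trans {n : N} {a b c : I} (hab : TreeRel e n a b) (hbc : TreeRel e n b c) :
    TreeRel e n a c := by
  induction hbc with
  | refl => exact hab
  | step hlt hn hlin _ _ ih => exact .step hlt hn hlin (ih hab)

theorem TreeRel.coherent [WellFoundedLT I] {n : N} {a b c : I} (hac : TreeRel e n a c)
    (hbc : TreeRel e n b c) (hab : a ≤ b) : TreeRel e n a b := by
  induction c using WellFoundedLT.induction generalizing a b with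
  | ind c ih =>
  cases hac with
  | refl => exact hab.antisymm hbc.le ▸ .refl _ _
  | @step x _ _ hx hnx hlinx hax =>
    cases hbc with
    | refl => exact .step hx hnx hlinx hax
    | @step y _ _ hy hny hliny hby =>
      have hlin : ∀ u v, u ≤ v → v < c → (u = x ∨ u = y) → (v = x ∨ v = y) → TreeRel e n u v := by
        intro u v huv hv hu hv'
        rcases le_total (e c x) (e c y) with hxy | hxy
        · exact hliny u v huv hv (by aesop) (by aesop)
        · exact hlinx u v huv hv (by aesop) (by aesop)
      rcases le_total x y with hxy | hxy
      · exact ih y hy (hax.trans (hlin x y hxy hy (.inl rfl) (.inr rfl))) hby hab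
      · exact ih x hx hax (hby.trans (hlin y x hxy hx (.inr rfl) (.inl rfl))) hab

theorem mk_subtype_lt_and_le_lt {κ : Cardinal.{u}} (hN : ∀ n : N, #(Set.Iic n) < κ) {f : I → N}
    {b : I} (hf : Set.InjOn f (Set.Iio b)) (n : N) : #{a // a < b ∧ f a ≤ n} < κ :=
  (mk_le_of_injective (f := fun a : {a // a < b ∧ f a ≤ n} => (⟨f a, a.2.2⟩ : Set.Iic n))
    fun a a' h => Subtype.ext (hf a.2.1 a'.2.1 (congrArg Subtype.val h))).trans_lt (hN n)

theorem TreeRel.small [WellFoundedLT I] {κ : Cardinal.{u}} (hκ : κ.IsRegular)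
    (hN : ∀ n : N, #(Set.Iic n) < κ) (he : ∀ b, Set.InjOn (e b) (Set.Iio b)) (n : N) (b : I) :
    #{a // TreeRel e n a b} < κ := by
  induction b using WellFoundedLT.induction with
  | ind b ih =>
  have hsub : {a | TreeRel e n a b} ⊆
      {b} ∪ ⋃ x ∈ {x | x < b ∧ e b x ≤ n}, {a | TreeRel e n a x} := by
    rintro a (_ | ⟨hxb, hn, _, hax⟩)
    · exact .inl rfl
    · exact .inr (Set.mem_biUnion (show _ ∈ {x | x < b ∧ e b x ≤ n} from ⟨hxb, hn⟩) hax)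
  refine ((mk_le_mk_of_subset hsub).trans (mk_union_le _ _)).trans_lt
    (add_lt_of_lt hκ.aleph0_le ?_ ?_)
  · simpa using hκ.nat_lt 1
  · exact (card_biUnion_lt_iff_forall_of_isRegular hκ (mk_subtype_lt_and_le_lt hN (he b) n)).2
      fun x hx => ih x hx.1

theorem bddAbove_range_of_mk_lt {κ : Cardinal.{u}} (hκ : κ.IsRegular)
    (hN : ∀ n : N, #(Set.Iic n) < κ) (hκN : κ ≤ #N) {ι : Type u} (f : ι → N) (hι : #ι < κ) :
    BddAbove (Set.range f) := by
  by_contra hf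
  have hcover : (⋃ i, Set.Iic (f i)) = Set.univ := Set.eq_univ_of_forall fun n => by
    obtain ⟨_, ⟨i, rfl⟩, hi⟩ := not_bddAbove_iff.1 hf n
    exact Set.mem_iUnion.2 ⟨i, hi.le⟩
  have hlt := (card_iUnion_lt_iff_forall_of_isRegular hκ hι).2 fun i => hN (f i)
  rw [hcover, mk_univ] at hlt
  exact hκN.not_gt hlt

theorem TreeRel.exhaust [WellFoundedLT I] {κ : Cardinal.{u}} (hκ : κ.IsRegular)
    (hN : ∀ n : N, #(Set.Iic n) < κ) (hκN : κ ≤ #N) (he : ∀ b, Set.InjOn (e b) (Set.Iio b))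
    {a b : I} (hab : a ≤ b) : ∃ n, TreeRel e n a b := by
  induction b using WellFoundedLT.induction generalizing a with
  | ind b ih =>
  rcases hab.eq_or_lt with rfl | hab
  · exact ⟨e a a, .refl _ _⟩
  let S := {x : I // x < b ∧ e b x ≤ e b a}
  have hS : #(S × S) < κ := by
    have := mk_subtype_lt_and_le_lt hN (he b) (e b a)
    exact mul_def S S ▸ mul_lt_of_lt hκ.aleph0_le this this
  have hpair (p : S × S) : ∃ n, p.1.1 ≤ p.2.1 → TreeRel e n p.1 p.2 := by
    by_cases h : p.1.1 ≤ p.2.1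
    · exact (ih _ p.2.2.1 h).imp fun _ hn _ => hn
    · exact ⟨e b a, fun h' => absurd h' h⟩
  choose f hf using hpair
  obtain ⟨n, hn⟩ := bddAbove_range_of_mk_lt hκ hN hκN f hS
  refine ⟨max n (e b a), .step hab (le_max_right _ _) (fun x y hxy hy hx' hy' => ?_) (.refl _ _)⟩
  exact (hf (⟨x, hxy.trans_lt hy, hx'⟩, ⟨y, hy, hy'⟩) hxy).mono
    ((hn ⟨_, rfl⟩).trans (le_max_left _ _))

end TreeRel

theorem isRegular_of_powerlt_self {κ : Cardinal.{u}} (hκ : ℵ₀ ≤ κ) (hpow : κ ^< κ = κ) :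
    κ.IsRegular :=
  ⟨hκ, le_of_not_gt fun h =>
    ((lt_power_cof_ord hκ).trans_le ((le_powerlt κ h).trans_eq hpow)).false⟩

theorem exists_treeFiltration {κ : Cardinal.{u}} (hκ : κ.IsRegular) :
    Nonempty (TreeFiltration (Order.succ κ).ord.ToType κ.ord.ToType κ) := by
  have hN : ∀ n : κ.ord.ToType, #(Set.Iic n) < κ := fun n => by
    simpa using mk_Iic_lt n (by simp) (by simpa using hκ.aleph0_le)
  have : Nonempty κ.ord.ToType := by
    simpa [← mk_ne_zero_iff] using (aleph0_pos.trans_le hκ.aleph0_le).ne'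
  have hinj (b : (Order.succ κ).ord.ToType) :
      ∃ f : (Order.succ κ).ord.ToType → κ.ord.ToType, Set.InjOn f (Set.Iio b) := by
    have hb : #(Set.Iio b) < Order.succ κ := by simpa using mk_Iio_lt b (by simp)
    obtain ⟨g⟩ : #(Set.Iio b) ≤ #κ.ord.ToType := by simpa [Order.lt_succ_iff] using hb
    refine ⟨Function.extend Subtype.val g fun _ => Classical.arbitrary _, ?_⟩
    intro x hx y hy hxy
    have := Subtype.val_injective.extend_apply g fun _ => Classical.arbitrary _
    exact congrArg Subtype.val (g.injective ((this ⟨x, hx⟩).symm.trans (hxy.trans (this ⟨y, hy⟩))))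
  choose e he using hinj
  exact ⟨{ rel := TreeRel e
           refl := TreeRel.refl
           trans := TreeRel.trans
           le := TreeRel.le
           coherent := TreeRel.coherent
           mono := fun h => TreeRel.mono h
           exhaust := TreeRel.exhaust hκ hN (by simp) he
           small := TreeRel.small hκ hN he }⟩

/-! ### Isomorphism types of initial segments -/

section IsoCode

variable {κ : Cardinal.{u}}

theorem exists_mk_Iio_toType_ord_eq {c : Cardinal.{u}} (hc : c < κ) :
    ∃ t : κ.ord.ToType, #(Set.Iio t) = c := by
  have hlt : c.ord < Ordinal.type (α := κ.ord.ToType) (· < ·) := by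
    simpa using ord_lt_ord.2 hc
  obtain ⟨t, ht⟩ := Ordinal.typein_surj _ hlt
  refine ⟨t, ?_⟩
  rw [← card_ord c, ← ht]
  exact (Ordinal.card_typein (r := ((· < ·) : κ.ord.ToType → _ → Prop)) t).symm

theorem mk_sigma_set_Iio_le (hκ : ℵ₀ ≤ κ) (hpow : κ ^< κ = κ) {Q : Type u} (hQ : #Q < κ) :
    #(Σ t : κ.ord.ToType, Set (Set.Iio t × Set.Iio t × Q)) ≤ κ := by
  have hset (t : κ.ord.ToType) : #(Set (Set.Iio t × Set.Iio t × Q)) ≤ κ := by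
    have ht : #(Set.Iio t) < κ := by simpa using mk_Iio_lt t
    have hprod : #(Set.Iio t × Set.Iio t × Q) < κ := by
      simpa using mul_lt_of_lt hκ ht (mul_lt_of_lt hκ ht hQ)
    calc #(Set (Set.Iio t × Set.Iio t × Q))
        ≤ κ ^ #(Set.Iio t × Set.Iio t × Q) := by
          rw [mk_set]
          exact power_le_power_right ((natCast_lt_aleph0 (n := 2)).le.trans hκ)
      _ ≤ κ ^< κ := le_powerlt κ hprod
      _ = κ := hpow
  rw [mk_sigma]
  exact (sum_le_sum _ (fun _ => κ) hset).trans (by simp [mul_eq_self hκ])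

theorem exists_isoCode (hκ : ℵ₀ ≤ κ) (hpow : κ ^< κ = κ) {I : Type*} {Q : Type u} (hQ : #Q < κ)
    (α : I → Type u) (hα : ∀ i, #(α i) < κ) (r : ∀ i, α i → α i → Q → Prop) :
    ∃ code : I → κ.ord.ToType, ∀ i j, code i = code j →
      ∃ f : α i ≃ α j, ∀ x y q, r j (f x) (f y) q ↔ r i x y q := by
  have hcopy (i : I) : ∃ c : Σ t : κ.ord.ToType, Set (Set.Iio t × Set.Iio t × Q),
      ∃ f : α i ≃ Set.Iio c.1, ∀ x y q, (f x, f y, q) ∈ c.2 ↔ r i x y q := by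
    obtain ⟨t, ht⟩ := exists_mk_Iio_toType_ord_eq (hα i)
    obtain ⟨f⟩ := Cardinal.eq.1 ht.symm
    exact ⟨⟨t, {p | r i (f.symm p.1) (f.symm p.2.1) p.2.2}⟩, f, by simp⟩
  choose c f hf using hcopy
  obtain ⟨g⟩ := (mk_sigma_set_Iio_le hκ hpow hQ).trans_eq (mk_ord_toType κ).symm
  refine ⟨fun i => g (c i), fun i j hij => ?_⟩
  have hc : c i = c j := g.injective hij
  have hfi := hf i
  generalize f i = fi at hfi
  revert fi
  rw [hc]
  exact fun fi hfi => ⟨fi.trans (f j).symm, fun x y q => by rw [← hf j, ← hfi]; simp⟩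

end IsoCode

namespace TreeFiltration

variable {I N : Type u} [LinearOrder I] [LinearOrder N] {κ : Cardinal.{u}}
  {X : TreeFiltration I N κ}

theorem rel_or_rel {n : N} {a b c : I} (hac : X.rel n a c) (hbc : X.rel n b c) :
    X.rel n a b ∨ X.rel n b a :=
  (le_total a b).imp (X.coherent hac hbc) (X.coherent hbc hac)

variable (X) in
/-- The closed initial segment below `a` in the `n`-th tree order. -/
abbrev Segment (n : N) (a : I) : Type u := {x // X.rel n x a}

variable (X) in
/-- An isomorphism between initial segments of the `n`-th tree order that preserves all the tree
orders up to the `n`-th. -/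
structure SegmentIso (n : N) (a b : I) extends X.Segment n a ≃ X.Segment n b where
  rel_iff : ∀ m ≤ n, ∀ x y, X.rel m (toEquiv x) (toEquiv y) ↔ X.rel m x y

namespace SegmentIso

variable {m n : N} {a b c : I}

/-- The identity. -/
protected def refl (X : TreeFiltration I N κ) (n : N) (a : I) : X.SegmentIso n a a where
  toEquiv := .refl _
  rel_iff _ _ _ _ := .rfl

/-- The inverse isomorphism. -/
protected def symm (f : X.SegmentIso n a b) : X.SegmentIso n b a where
  toEquiv := f.toEquiv.symm
  rel_iff m hm x y := by
    simpa using (f.rel_iff m hm (f.toEquiv.symm x) (f.toEquiv.symm y)).symm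

/-- The composition of two isomorphisms. -/
protected def trans (f : X.SegmentIso n a b) (g : X.SegmentIso n b c) : X.SegmentIso n a c where
  toEquiv := f.toEquiv.trans g.toEquiv
  rel_iff m hm _ _ := (g.rel_iff m hm _ _).trans (f.rel_iff m hm _ _)

/-- The restriction to a smaller initial segment of an earlier tree order. -/
def restrict (f : X.SegmentIso n a b) (hmn : m ≤ n) (c : X.Segment n a) :
    X.SegmentIso m c (f.toEquiv c) where
  toFun x := ⟨f.toEquiv ⟨x, X.trans (X.mono hmn x.2) c.2⟩, (f.rel_iff m hmn _ _).2 x.2⟩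
  invFun y := ⟨f.toEquiv.symm ⟨y, X.trans (X.mono hmn y.2) (f.toEquiv c).2⟩, by
    have := X.trans (X.mono hmn y.2) (f.toEquiv c).2
    simpa [SegmentIso.symm] using (f.symm.rel_iff m hmn ⟨y, this⟩ (f.toEquiv c)).2 y.2⟩
  left_inv x := by simp
  right_inv y := by simp
  rel_iff k hk x y := f.rel_iff k (hk.trans hmn) _ _

theorem coe_apply_top (f : X.SegmentIso n a b) : (f.toEquiv ⟨a, X.refl n a⟩ : I) = b := by
  refine (X.le (f.toEquiv ⟨a, X.refl n a⟩).2).antisymm ?_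
  let x := f.toEquiv.symm ⟨b, X.refl n b⟩
  have h := (f.rel_iff n le_rfl x ⟨a, X.refl n a⟩).2 x.2
  simpa [x] using X.le h

end SegmentIso

variable (X) in
/-- `X.Sim n a b` means that `a` and `b` have the same type at level `n`. -/
def Sim (n : N) (a b : I) : Prop := Nonempty (X.SegmentIso n a b)

namespace Sim

variable {m n : N} {a b c : I}

protected theorem refl (X : TreeFiltration I N κ) (n : N) (a : I) : X.Sim n a a := ⟨.refl X n a⟩

protected theorem symm : X.Sim n a b → X.Sim n b a := .map .symm

protected theorem trans : X.Sim n a b → X.Sim n b c → X.Sim n a c := .map2 .trans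

theorem mono (hmn : m ≤ n) : X.Sim n a b → X.Sim m a b
  | ⟨f⟩ => ⟨f.coe_apply_top ▸ f.restrict hmn ⟨a, X.refl n a⟩⟩

theorem exists_rel (hmn : m ≤ n) (hab : X.Sim n a b) (hca : X.rel m c a) :
    ∃ c', X.rel m c' b ∧ X.Sim n c c' ∧ (c < a → c' < b) := by
  obtain ⟨f⟩ := hab
  let x : X.Segment n a := ⟨c, X.mono hmn hca⟩
  refine ⟨f.toEquiv x, ?_, ⟨f.restrict le_rfl x⟩, fun hlt => ?_⟩
  · simpa only [f.coe_apply_top] using (f.rel_iff m hmn x ⟨a, X.refl n a⟩).2 hca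
  · refine (X.le (f.toEquiv x).2).lt_of_ne fun h => hlt.ne ?_
    exact congrArg Subtype.val
      (f.toEquiv.injective (Subtype.ext (h.trans f.coe_apply_top.symm)) : x = ⟨a, X.refl n a⟩)

end Sim

/-! ### Least representatives of types -/

section Rep

variable [WellFoundedLT I] {m n : N} {a b c : I}

variable (X) in
/-- The least element with the same type as `a` at level `n`. -/
noncomputable def rep (n : N) (a : I) : I :=
  wellFounded_lt.min {b | X.Sim n a b} ⟨a, .refl X n a⟩

theorem sim_rep (X : TreeFiltration I N κ) (n : N) (a : I) : X.Sim n a (X.rep n a) :=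
  wellFounded_lt.min_mem {b | X.Sim n a b} _

theorem rep_le (h : X.Sim n a b) : X.rep n a ≤ b :=
  WellFounded.min_le wellFounded_lt (s := {b | X.Sim n a b}) h

theorem rep_eq_rep_iff : X.rep n a = X.rep n b ↔ X.Sim n a b :=
  ⟨fun h => (h ▸ sim_rep X n a).trans (sim_rep X n b).symm, fun h =>
    (rep_le (h.trans (sim_rep X n b))).antisymm (rep_le (h.symm.trans (sim_rep X n a)))⟩

theorem rep_rep (hmn : m ≤ n) : X.rep m (X.rep n a) = X.rep m a :=
  rep_eq_rep_iff.2 ((sim_rep X n a).symm.mono hmn)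

theorem rep_lt_rep (hab : X.rel n a b) (hlt : a < b) : X.rep n a < X.rep n b := by
  obtain ⟨c, -, hac, hc⟩ := (sim_rep X n b).exists_rel le_rfl hab
  exact (rep_le hac).trans_lt (hc hlt)

theorem rep_le_rep (hab : X.rel n a b) : X.rep n a ≤ X.rep n b :=
  (X.le hab).eq_or_lt.elim (fun h => h ▸ le_rfl) fun h => (rep_lt_rep hab h).le

theorem lt_of_rep_lt_rep (hab : X.rel n a b) (h : X.rep n a < X.rep n b) : a < b :=
  (X.le hab).lt_of_ne (by rintro rfl; exact h.false)

theorem eq_of_rep_eq_rep (h : X.rep n a = X.rep n b) (hac : X.rel n a c) (hbc : X.rel n b c) :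
    a = b := by
  by_contra hne
  rcases rel_or_rel hac hbc with hab | hba
  · exact (rep_lt_rep hab ((X.le hab).lt_of_ne hne)).ne h
  · exact (rep_lt_rep hba ((X.le hba).lt_of_ne' hne)).ne' h

theorem rel_of_map_rel (hmn : m ≤ n) (hab : X.rel n a b)
    (h : Relation.Map (X.rel m) (X.rep n) (X.rep n) (X.rep n a) (X.rep n b)) : X.rel m a b := by
  obtain ⟨a', b', hab', ha, hb⟩ := h
  obtain ⟨c, hcb, hac, -⟩ := (rep_eq_rep_iff.1 hb).exists_rel hmn hab'
  have hca : X.rep n c = X.rep n a := (rep_eq_rep_iff.2 hac).symm.trans ha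
  exact eq_of_rep_eq_rep hca (X.mono hmn hcb) hab ▸ hcb

theorem map_rel_coherent {i j k : I} (hmn : m ≤ n)
    (hik : Relation.Map (X.rel m) (X.rep n) (X.rep n) i k)
    (hjk : Relation.Map (X.rel m) (X.rep n) (X.rep n) j k) (hij : i ≤ j) :
    Relation.Map (X.rel m) (X.rep n) (X.rep n) i j := by
  obtain ⟨a, c, hac, rfl, rfl⟩ := hik
  obtain ⟨b, c', hbc, rfl, hc⟩ := hjk
  obtain ⟨a', hac', ha, -⟩ := (rep_eq_rep_iff.1 hc.symm).exists_rel hmn hac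
  rw [rep_eq_rep_iff.2 ha] at hij ⊢
  rcases rel_or_rel hac' hbc with hab | hba
  · exact ⟨_, _, hab, rfl, rfl⟩
  · have hba' := X.mono hmn hba
    obtain rfl := eq_of_rep_eq_rep ((rep_le_rep hba').antisymm hij) hba' (X.refl n a')
    exact ⟨_, _, X.refl m b, rfl, rfl⟩

end Rep

theorem mk_range_rep_le [WellFoundedLT I] (hκ : ℵ₀ ≤ κ) (hpow : κ ^< κ = κ)
    (X : TreeFiltration I N κ) {n : N} (hn : #(Set.Iic n) < κ) : #(Set.range (X.rep n)) ≤ κ := by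
  obtain ⟨code, hcode⟩ := exists_isoCode hκ hpow hn (X.Segment n) (X.small n)
    fun _ x y m => X.rel m x y
  have hrep (a b : I) (h : code a = code b) : X.rep n a = X.rep n b := by
    obtain ⟨f, hf⟩ := hcode a b h
    exact rep_eq_rep_iff.2 ⟨f, fun m hm x y => hf x y ⟨m, hm⟩⟩
  refine (mk_le_of_injective (f := fun i : Set.range (X.rep n) => code i.2.choose)
    fun i j hij => ?_).trans_eq (mk_ord_toType κ)
  exact Subtype.ext (i.2.choose_spec.symm.trans ((hrep _ _ hij).trans j.2.choose_spec))

/-! ### The colouring of finite chains -/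

section Colour

variable {n : N} {w : List I}

open Classical in
/-- The least `n` such that `w` is a chain in the `n`-th tree order (arbitrary if there is none). -/
noncomputable def level [WellFoundedLT N] [Nonempty N] (X : TreeFiltration I N κ)
    (w : List I) : N :=
  if h : {n | w.Pairwise (X.rel n)}.Nonempty then wellFounded_lt.min _ h else Classical.arbitrary N

theorem isLeast_level [WellFoundedLT N] [Nonempty N] (hw : w.Pairwise (X.rel n)) :
    IsLeast {n | w.Pairwise (X.rel n)} (X.level w) := by
  have h : {n | w.Pairwise (X.rel n)}.Nonempty := ⟨n, hw⟩
  rw [level, dif_pos h]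
  exact ⟨wellFounded_lt.min_mem _ h, fun _ hm => WellFounded.min_le wellFounded_lt hm⟩

/-- The level of `w` together with the types of its elements at that level. -/
noncomputable def colour [WellFoundedLT I] [WellFoundedLT N] [Nonempty N]
    (X : TreeFiltration I N κ) (w : List I) : N × List I :=
  (X.level w, w.map (X.rep (X.level w)))

theorem mk_range_colour_le [WellFoundedLT I] [WellFoundedLT N] [Nonempty N] (hκ : ℵ₀ ≤ κ)
    (hpow : κ ^< κ = κ) (X : TreeFiltration I N κ) (hN : #N ≤ κ) (hN' : ∀ n : N, #(Set.Iic n) < κ) :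
    #(Set.range X.colour) ≤ κ := by
  let f (c : Σ n, List (Set.range (X.rep n))) : N × List I := (c.1, c.2.map Subtype.val)
  have hsub : Set.range X.colour ⊆ Set.range f := by
    rintro _ ⟨w, rfl⟩
    exact ⟨⟨X.level w, w.map (Set.rangeFactorization (X.rep _))⟩, by
      simp [f, colour, Set.rangeFactorization, Function.comp_def]⟩
  have hlist (n : N) : #(List (Set.range (X.rep n))) ≤ κ :=
    (mk_list_le_max _).trans (max_le hκ (X.mk_range_rep_le hκ hpow (hN' n)))
  calc #(Set.range X.colour) ≤ #(Σ n, List (Set.range (X.rep n))) :=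
        (mk_le_mk_of_subset hsub).trans mk_range_le
    _ ≤ sum fun _ : N => κ := mk_sigma _ ▸ sum_le_sum _ _ hlist
    _ ≤ κ := by simpa using mul_le_of_le hκ hN le_rfl

theorem exists_forall_rel [Nonempty N] (X : TreeFiltration I N κ) (W : Finset I) :
    ∃ n, ∀ a ∈ W, ∀ b ∈ W, a ≤ b → X.rel n a b := by
  have hpair (p : I × I) : ∃ n, p.1 ≤ p.2 → X.rel n p.1 p.2 := by
    by_cases h : p.1 ≤ p.2
    · exact (X.exhaust h).imp fun _ hn _ => hn
    · exact ⟨Classical.arbitrary N, fun h' => absurd h' h⟩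
  choose f hf using hpair
  obtain ⟨n, hn⟩ := ((W ×ˢ W).image f).exists_le
  exact ⟨n, fun a ha b hb hab => X.mono
    (hn _ (Finset.mem_image_of_mem f (Finset.mk_mem_product ha hb))) (hf (a, b) hab)⟩

theorem exists_lt_forall_rel [WellFoundedLT I] (X : TreeFiltration I N κ) (hn : ¬ IsMin n)
    (A : Finset I) : ∃ n' < n, ∀ a b, X.rep n a ∈ A → X.rep n b ∈ A →
      ∀ m < n, X.rel m a b → X.rel n' a b := by
  obtain ⟨n₀, hn₀⟩ := not_isMin_iff.1 hn
  have : Nonempty (Set.Iio n) := ⟨n₀, hn₀⟩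
  have hpair (p : I × I) : ∃ n' : Set.Iio n, ∀ m < n,
      Relation.Map (X.rel m) (X.rep n) (X.rep n) p.1 p.2 →
        Relation.Map (X.rel n') (X.rep n) (X.rep n) p.1 p.2 := by
    by_cases h : ∃ m < n, Relation.Map (X.rel m) (X.rep n) (X.rep n) p.1 p.2
    · obtain ⟨m, hm, h⟩ := h
      exact ⟨⟨m, hm⟩, fun _ _ _ => h⟩
    · exact ⟨⟨n₀, hn₀⟩, fun m hm h' => absurd ⟨m, hm, h'⟩ h⟩
  choose f hf using hpair
  obtain ⟨n', hn'⟩ := ((A ×ˢ A).image f).exists_le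
  refine ⟨n', n'.2, fun a b ha hb m hm hab => ?_⟩
  have hle := hn' _ (Finset.mem_image_of_mem f (Finset.mk_mem_product ha hb))
  exact X.mono hle (rel_of_map_rel (f _).2.le (X.mono hm.le hab) (hf _ m hm ⟨a, b, hab, rfl, rfl⟩))

end Colour

end TreeFiltration

/-! ### Iterated filter quantifiers -/

section IterFilter

open Filter

variable {ι : Type u} [DecidableEq ι] {K : Type w} {l : Filter K}

/-- The iterated filter quantifier: `∃ᶠ z in iterFilter l [i₁, …, iₙ] y, Φ z` says that
`∃ᶠ x₁ in l, …, ∃ᶠ xₙ in l, Φ z`, where `z` is obtained from `y` by setting `z iₖ = xₖ`. -/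
def iterFilter (l : Filter K) : List ι → (ι → K) → Filter (ι → K)
  | [], y => pure y
  | i :: is, y => l.bind fun x => iterFilter l is (Function.update y i x)

theorem frequently_iterFilter_cons {i : ι} {is : List ι} {y : ι → K} {Φ : (ι → K) → Prop} :
    (∃ᶠ z in iterFilter l (i :: is) y, Φ z) ↔
      ∃ᶠ x in l, ∃ᶠ z in iterFilter l is (Function.update y i x), Φ z :=
  frequently_bind

theorem iterFilter_append (l : Filter K) (is js : List ι) (y : ι → K) :
    iterFilter l (is ++ js) y = (iterFilter l is y).bind (iterFilter l js) := by
  induction is generalizing y with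
  | nil => exact (pure_bind y (iterFilter l js)).symm
  | cons i is ih => simp only [List.cons_append, iterFilter, ih]; rfl

theorem frequently_iterFilter_concat {i : ι} {is : List ι} {y : ι → K} {Φ : (ι → K) → Prop} :
    (∃ᶠ z in iterFilter l (is ++ [i]) y, Φ z) ↔
      ∃ᶠ z in iterFilter l is y, ∃ᶠ x in l, Φ (Function.update z i x) := by
  simp [iterFilter_append, iterFilter, frequently_bind]

theorem eventually_iterFilter_eq_of_notMem (l : Filter K) (is : List ι) (y : ι → K) :
    ∀ᶠ z in iterFilter l is y, ∀ i ∉ is, z i = y i := by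
  induction is generalizing y with
  | nil => exact eventually_pure.2 fun _ _ => rfl
  | cons i is ih =>
    refine eventually_bind.2 (.of_forall fun x => (ih _).mono fun z hz j hj => ?_)
    rw [List.mem_cons, not_or] at hj
    rw [hz j hj.2, Function.update_of_ne hj.1]

theorem exists_frequently_iterFilter_of_append {is js : List ι} {y : ι → K}
    {Φ : (ι → K) → Prop} (h : ∃ᶠ z in iterFilter l (is ++ js) y, Φ z) :
    ∃ y', (∀ i ∉ is, y' i = y i) ∧ ∃ᶠ z in iterFilter l js y', Φ z := by
  rw [iterFilter_append, frequently_bind] at h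
  obtain ⟨y', h, hy'⟩ := (h.and_eventually (eventually_iterFilter_eq_of_notMem l is y)).exists
  exact ⟨y', hy', h⟩

instance iterFilter_neBot [l.NeBot] (is : List ι) (y : ι → K) : (iterFilter l is y).NeBot := by
  induction is generalizing y with
  | nil => exact pure_neBot
  | cons i is ih =>
    refine frequently_true_iff_neBot _ |>.1 (frequently_iterFilter_cons.2 ?_)
    exact (Eventually.of_forall fun x => (frequently_true_iff_neBot _).2 (ih _)).frequently

theorem eventually_iterFilter_injOn (hl : l ≤ cofinite) {is : List ι} (his : is.Nodup)
    (y : ι → K) : ∀ᶠ z in iterFilter l is y, Set.InjOn z {i | i ∈ is} := by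
  induction is using List.reverseRecOn with
  | nil => exact .of_forall fun z => by simp
  | append_singleton is i ih =>
    obtain ⟨his, -, hi⟩ := List.nodup_append.1 his
    have hi : i ∉ is := fun h => hi i h i (List.mem_singleton_self i) rfl
    rw [iterFilter_append, eventually_bind]
    filter_upwards [ih his] with z hz
    refine eventually_bind.2 ?_
    have hfin : (z '' {j | j ∈ is}).Finite := (List.finite_toSet is).image z
    filter_upwards [hl hfin.compl_mem_cofinite] with x hx
    refine eventually_pure.2 ?_
    have hset : {j | j ∈ is ++ [i]} = insert i {j | j ∈ is} := by ext; simp [or_comm]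
    have heq : Set.EqOn (Function.update z i x) z {j | j ∈ is} := fun j hj =>
      Function.update_of_ne (by rintro rfl; exact hi hj) _ _
    rw [hset, Set.injOn_insert (by exact hi), heq.injOn_iff, heq.image_eq, Function.update_self]
    exact ⟨hz, hx⟩

theorem exists_frequently_iterFilter {c : Cardinal.{w}} [CardinalInterFilter l c] {D : Type w}
    (hD : #D < c) {is : List ι} {y : ι → K} {Φ : D → (ι → K) → Prop}
    (h : ∃ᶠ z in iterFilter l is y, ∃ d, Φ d z) : ∃ d, ∃ᶠ z in iterFilter l is y, Φ d z := by
  induction is generalizing y with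
  | nil => simpa [iterFilter, Filter.Frequently] using h
  | cons i is ih =>
    rw [frequently_iterFilter_cons] at h
    by_contra! hcon
    refine h (((eventually_cardinal_forall hD).2 fun d => eventually_bind.1 (hcon d)).mono ?_)
    intro x hx hfreq
    obtain ⟨d, hd⟩ := ih hfreq
    exact hd (hx d)

theorem exists_frequently_iterFilter_forall_eq {c : Cardinal.{w}} [CardinalInterFilter l c]
    {D : Type w} (hD : #D < c) [Nonempty D] {is : List ι} {y : ι → K} {Φ : (ι → K) → Prop}
    (h : ∃ᶠ z in iterFilter l is y, Φ z) {β : Type*} (F : Finset β) (f : β → (ι → K) → D) :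
    ∃ d : β → D, ∃ᶠ z in iterFilter l is y, Φ z ∧ ∀ b ∈ F, f b z = d b := by
  classical
  induction F using Finset.induction with
  | empty => exact ⟨fun _ => Classical.arbitrary D, by simpa using h⟩
  | insert b F hb ih =>
    obtain ⟨d, hd⟩ := ih
    obtain ⟨d₀, hd₀⟩ := exists_frequently_iterFilter (Φ := fun d₀ z =>
      (Φ z ∧ ∀ b ∈ F, f b z = d b) ∧ f b z = d₀) hD (hd.mono fun z hz => ⟨_, hz, rfl⟩)
    refine ⟨Function.update d b d₀, hd₀.mono fun z ⟨⟨hz, hF⟩, hbz⟩ => ⟨hz, fun b' hb' => ?_⟩⟩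
    rcases Finset.mem_insert.1 hb' with rfl | hb'F
    · rwa [Function.update_self]
    · rw [Function.update_of_ne (ne_of_mem_of_not_mem hb'F hb), hF b' hb'F]

end IterFilter

/-! ### Transfer of iterated quantifiers along trees -/

section TreeTransfer

open Filter

theorem exists_eq_append_cons_filter_lt {α : Type*} [LinearOrder α] {s : List α}
    (hs : s.Pairwise (· < ·)) {c : α} (hc : c ∈ s) :
    ∃ p : List α, (∀ x ∈ p, x < c) ∧ s = p ++ c :: s.filter (c < ·) := by
  obtain ⟨p, q, rfl⟩ := List.append_of_mem hc
  obtain ⟨-, hcq, hp⟩ := List.pairwise_append.1 hs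
  have hp (x) (hx : x ∈ p) : x < c := hp x hx c (by simp)
  have hq (x) (hx : x ∈ q) : c < x := (List.pairwise_cons.1 hcq).1 x hx
  refine ⟨p, hp, ?_⟩
  rw [List.filter_append, List.filter_eq_nil_iff.2 (by simpa using fun x hx => (hp x hx).le),
    List.filter_cons_of_neg (by simp), List.filter_eq_self.2 (by simpa using hq), List.nil_append]

variable {ι : Type u} {ι' : Type v} [LinearOrder ι] [LinearOrder ι'] {K : Type w} {l : Filter K}
  {r : ι → ι → Prop} {ϖ : ι → ι'} {is : List ι} {js : List ι'} {Φ : (ι' → K) → Prop}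

/-- Along every branch `{i ∈ is | r i j}` of the tree order `r`, the assignment `x`, transported
along `ϖ`, can be completed to an assignment for which the rest of the iterated quantifier
`∃ᶠ z in iterFilter l js _, Φ z` holds. -/
def BranchwiseExtends (l : Filter K) (r : ι → ι → Prop) (ϖ : ι → ι') (js : List ι')
    (Φ : (ι' → K) → Prop) (is : List ι) (x : ι → K) : Prop :=
  ∀ j ∈ is, ∃ y, (∃ᶠ z in iterFilter l (js.filter (ϖ j < ·)) y, Φ z) ∧
    ∀ i ∈ is, r i j → y (ϖ i) = x i

theorem BranchwiseExtends.exists_append_cons (hjs : js.Pairwise (· < ·))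
    (hlt : ∀ {i j}, r i j → i < j → ϖ i < ϖ j)
    (hcoh : ∀ {i j k}, r i k → r j k → i ≤ j → r i j) {y₀ : ι' → K}
    (hy₀ : ∃ᶠ z in iterFilter l js y₀, Φ z) {x : ι → K} (hx : BranchwiseExtends l r ϖ js Φ is x)
    {c : ι} (hc : ϖ c ∈ js) (hic : ∀ i ∈ is, i < c) :
    ∃ y p, (∀ i ∈ is, r i c → y (ϖ i) = x i ∧ ϖ i ∉ p) ∧
      ∃ᶠ z in iterFilter l (p ++ ϖ c :: js.filter (ϖ c < ·)) y, Φ z := by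
  classical
  by_cases hbranch : ∃ i ∈ is, r i c
  · obtain ⟨i, hi, hmax⟩ := (is.toFinset.filter (r · c)).exists_max_image id
      (by simpa [Finset.filter_nonempty_iff] using hbranch)
    simp only [Finset.mem_filter, List.mem_toFinset, id, and_imp] at hi hmax
    obtain ⟨y, hy, hyx⟩ := hx i hi.1
    have hϖ : ϖ i < ϖ c := hlt hi.2 (hic i hi.1)
    obtain ⟨p, -, hp⟩ := exists_eq_append_cons_filter_lt (c := ϖ c) (hjs.filter (ϖ i < ·))
      (by simp [hc, hϖ])
    have hfilter : (js.filter (ϖ i < ·)).filter (ϖ c < ·) = js.filter (ϖ c < ·) := by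
      rw [List.filter_filter]
      refine List.filter_congr fun k _ => ?_
      simpa using hϖ.trans
    rw [hfilter] at hp
    refine ⟨y, p, fun k hk hkc => ?_, hp ▸ hy⟩
    have hki : r k i := hcoh hkc hi.2 (hmax k hk hkc)
    refine ⟨hyx k hk hki, fun hkp => ?_⟩
    have hlt' : ϖ i < ϖ k := by
      have : ϖ k ∈ js.filter (ϖ i < ·) := hp ▸ List.mem_append_left _ hkp
      simpa using (List.mem_filter.1 this).2
    rcases (hmax k hk hkc).eq_or_lt with rfl | h
    · exact hlt'.false
    · exact hlt'.asymm (hlt hki h)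
  · obtain ⟨p, -, hp⟩ := exists_eq_append_cons_filter_lt hjs hc
    exact ⟨y₀, p, fun i hi hr => absurd ⟨i, hi, hr⟩ hbranch, hp ▸ hy₀⟩

theorem BranchwiseExtends.frequently_concat (hjs : js.Pairwise (· < ·))
    (hle : ∀ {i j}, r i j → i ≤ j) (hlt : ∀ {i j}, r i j → i < j → ϖ i < ϖ j)
    (hcoh : ∀ {i j k}, r i k → r j k → i ≤ j → r i j) {y₀ : ι' → K}
    (hy₀ : ∃ᶠ z in iterFilter l js y₀, Φ z) {x : ι → K} (hx : BranchwiseExtends l r ϖ js Φ is x)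
    {c : ι} (hc : ϖ c ∈ js) (hic : ∀ i ∈ is, i < c) :
    ∃ᶠ t in l, BranchwiseExtends l r ϖ js Φ (is ++ [c]) (Function.update x c t) := by
  obtain ⟨y, p, hyp, hy⟩ := hx.exists_append_cons hjs hlt hcoh hy₀ hc hic
  obtain ⟨y', hy', hfreq⟩ := exists_frequently_iterFilter_of_append hy
  refine (frequently_iterFilter_cons.1 hfreq).mono fun t ht j hj => ?_
  rcases List.mem_append.1 hj with hj | hj
  · obtain ⟨z, hz, hzx⟩ := hx j hj
    refine ⟨z, hz, fun i hi hij => ?_⟩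
    have hne : i ≠ c := ((hle hij).trans_lt (hic j hj)).ne
    rw [Function.update_of_ne hne]
    exact hzx i (by simpa [hne] using hi) hij
  · obtain rfl := List.mem_singleton.1 hj
    refine ⟨_, ht, fun i hi hij => ?_⟩
    rcases eq_or_ne i j with rfl | hne
    · simp
    · have hi : i ∈ is := by simpa [hne] using hi
      rw [Function.update_of_ne hne, Function.update_of_ne (hlt hij (hic i hi)).ne,
        hy' _ (hyp i hi hij).2, (hyp i hi hij).1]

theorem frequently_iterFilter_branchwise (hjs : js.Pairwise (· < ·))
    (hle : ∀ {i j}, r i j → i ≤ j) (hlt : ∀ {i j}, r i j → i < j → ϖ i < ϖ j)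
    (hcoh : ∀ {i j k}, r i k → r j k → i ≤ j → r i j) {y₀ : ι' → K}
    (hy₀ : ∃ᶠ z in iterFilter l js y₀, Φ z) [l.NeBot] (his : is.Pairwise (· < ·))
    (hmaps : ∀ i ∈ is, ϖ i ∈ js) (x₀ : ι → K) :
    ∃ᶠ x in iterFilter l is x₀, ∀ j ∈ is, ∃ y, Φ y ∧ ∀ i ∈ is, r i j → y (ϖ i) = x i := by
  have hext : ∃ᶠ x in iterFilter l is x₀, BranchwiseExtends l r ϖ js Φ is x := by
    induction is using List.reverseRecOn with
    | nil => exact (Eventually.of_forall fun x j hj => by simp at hj).frequently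
    | append_singleton is c ih =>
      obtain ⟨his, -, hic⟩ := List.pairwise_append.1 his
      refine frequently_iterFilter_concat.2 ((ih his fun i hi => hmaps i (by simp [hi])).mono
        fun x hx => hx.frequently_concat hjs hle hlt hcoh hy₀ (hmaps c (by simp)) ?_)
      exact fun i hi => hic i hi c (by simp)
  refine hext.mono fun x hx j hj => ?_
  obtain ⟨y, hy, hyx⟩ := hx j hj
  obtain ⟨z, hz, hzy⟩ := (hy.and_eventually (eventually_iterFilter_eq_of_notMem l _ y)).exists
  refine ⟨z, hz, fun i hi hij => (hzy _ fun hmem => ?_).trans (hyx i hi hij)⟩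
  have hϖ : ϖ j < ϖ i := by simpa using (List.mem_filter.1 hmem).2
  rcases (hle hij).eq_or_lt with rfl | h
  · exact hϖ.false
  · exact hϖ.asymm (hlt hij h)

end TreeTransfer

/-! ### Finite reflection of the colouring -/

namespace TreeFiltration

open Filter

section Predicts

variable {I N : Type u} [LinearOrder I] [WellFoundedLT I] [LinearOrder N] [WellFoundedLT N]
  [Nonempty N] {κ : Cardinal.{u}} {K D : Type w} {l : Filter K} {c : Cardinal.{w}}

/-- The assignment `y` of the types at level `n` belonging to `A` makes the value of `g` at every
chain whose level is in `S` a function `p` of the colour of the chain. -/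
def Predicts (X : TreeFiltration I N κ) (g : List K → D) (n : N) (A : Finset I) (S : Set N)
    (p : N × List I → D) (y : I → K) : Prop :=
  ∀ w : List I, w.Pairwise (· < ·) → w.Pairwise (X.rel n) → (∀ a ∈ w, X.rep n a ∈ A) →
    X.level w ∈ S → g (w.map fun a => y (X.rep n a)) = p (X.colour w)

variable {X : TreeFiltration I N κ} {g : List K → D} {n : N} {A : Finset I}

theorem exists_frequently_predicts_Iic [CardinalInterFilter l c] (hD : #D < c)
    {y₀ : I → K} {p : N × List I → D}
    (h : ∃ᶠ y in iterFilter l A.sort y₀, X.Predicts g n A (Set.Iio n) p y) :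
    ∃ p, ∃ᶠ y in iterFilter l A.sort y₀, X.Predicts g n A (Set.Iic n) p y := by
  classical
  have : Nonempty D := ⟨g []⟩
  obtain ⟨d, hd⟩ := exists_frequently_iterFilter_forall_eq hD h A.powerset
    fun (s : Finset I) y => g ((s.sort (· ≤ ·)).map y)
  refine ⟨fun k => if k.1 = n then d k.2.toFinset else p k, hd.mono ?_⟩
  -- On a chain of level `n`, the value of `g` depends only on the finite set of the types met.
  rintro y ⟨hlt, heq⟩ w hw hwn hwA hle
  rcases hle.lt_or_eq with hn | hn
  · exact (hlt w hw hwn hwA hn).trans (if_neg hn.ne).symm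
  · have hsorted : (w.map (X.rep n)).Pairwise (· < ·) :=
      List.pairwise_map.2 ((hw.and hwn).imp fun h => rep_lt_rep h.2 h.1)
    have hsort : (w.map (X.rep n)).toFinset.sort = w.map (X.rep n) :=
      (List.toFinset_sort _ hsorted.nodup).2 (hsorted.imp le_of_lt)
    have hsub : (w.map (X.rep n)).toFinset ∈ A.powerset := by
      simpa [Finset.subset_iff] using hwA
    calc g (w.map fun a => y (X.rep n a)) = d (w.map (X.rep n)).toFinset := by
          rw [← heq _ hsub, hsort, List.map_map]; rfl
      _ = _ := by simp only [colour, hn, if_true]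

theorem frequently_predicts_Iio [l.NeBot] {n' : N} (hn' : n' < n)
    (hA : ∀ a b, X.rep n a ∈ A → X.rep n b ∈ A → ∀ m < n, X.rel m a b → X.rel n' a b)
    {y₀ : I → K} {p : N × List I → D}
    (h : ∃ᶠ y in iterFilter l (A.image (X.rep n')).sort y₀,
      X.Predicts g n' (A.image (X.rep n')) (Set.Iic n') p y) :
    ∃ᶠ y in iterFilter l A.sort y₀, X.Predicts g n A (Set.Iio n) p y := by
  have hfreq := frequently_iterFilter_branchwise (Finset.sortedLT_sort _).pairwise
    (r := Relation.Map (X.rel n') (X.rep n) (X.rep n)) (ϖ := X.rep n') (is := A.sort)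
    (by rintro _ _ ⟨a, b, hab, rfl, rfl⟩; exact rep_le_rep (X.mono hn'.le hab))
    (by
      rintro _ _ ⟨a, b, hab, rfl, rfl⟩ hlt
      rw [rep_rep hn'.le, rep_rep hn'.le]
      exact rep_lt_rep hab (lt_of_rep_lt_rep (X.mono hn'.le hab) hlt))
    (map_rel_coherent hn'.le) h (Finset.sortedLT_sort _).pairwise
    (fun i hi => by simpa using ⟨i, by simpa using hi, rfl⟩) y₀
  refine hfreq.mono fun x hx w hw hwn hwA hlt => ?_
  have hwn' : w.Pairwise (X.rel n') := (isLeast_level hwn).1.imp_of_mem fun ha hb hab =>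
    hA _ _ (hwA _ ha) (hwA _ hb) _ hlt hab
  have hmem {a : I} (ha : a ∈ w) : X.rep n a ∈ A.sort := by simpa using hwA a ha
  -- The chain `w` lies on a single branch, so `x` can be replaced by an assignment at level `n'`.
  obtain ⟨y, hy, hyx⟩ : ∃ y, X.Predicts g n' (A.image (X.rep n')) (Set.Iic n') p y ∧
      ∀ a ∈ w, y (X.rep n' a) = x (X.rep n a) := by
    rcases List.eq_nil_or_concat w with rfl | ⟨v, b, rfl⟩
    · exact h.exists.imp fun y hy => ⟨hy, by simp⟩
    · rw [List.concat_eq_append] at hwn' hmem ⊢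
      obtain ⟨y, hy, hyx⟩ := hx (X.rep n b) (hmem (by simp))
      refine ⟨y, hy, fun a ha => ?_⟩
      have hab : X.rel n' a b := (List.mem_append.1 ha).elim
        (fun ha => (List.pairwise_append.1 hwn').2.2 a ha b (by simp))
        (fun ha => List.mem_singleton.1 ha ▸ X.refl n' b)
      rw [← rep_rep hn'.le]
      exact hyx _ (hmem ha) ⟨a, b, hab, rfl, rfl⟩
  rw [← hy w hw hwn' (fun a ha => Finset.mem_image.2 ⟨_, hwA a ha, rep_rep hn'.le⟩)
    ((isLeast_level hwn').2 hwn'), List.map_congr_left hyx]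

theorem exists_frequently_predicts [CardinalInterFilter l c] [l.NeBot] (hD : #D < c)
    (X : TreeFiltration I N κ) (g : List K → D) (n : N) (A : Finset I) (y₀ : I → K) :
    ∃ p, ∃ᶠ y in iterFilter l A.sort y₀, X.Predicts g n A (Set.Iic n) p y := by
  induction n using WellFoundedLT.induction generalizing A with
  | ind n ih =>
  obtain ⟨p, hp⟩ : ∃ p, ∃ᶠ y in iterFilter l (A.sort (· ≤ ·)) y₀,
      X.Predicts g n A (Set.Iio n) p y := by
    by_cases hn : IsMin n
    · exact ⟨fun _ => g [], (Eventually.of_forall fun y w _ _ _ hlt =>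
        absurd hlt hn.not_lt).frequently⟩
    · obtain ⟨n', hn', hA⟩ := X.exists_lt_forall_rel hn A
      exact (ih n' hn' _).imp fun _ => frequently_predicts_Iio hn' hA
  exact exists_frequently_predicts_Iic hD hp

end Predicts

end TreeFiltration

/-- The colouring `f` of the finite increasing sequences in `I` is finitely reflected in `K`
modulo `lam`: for every finite part `W` of `I` and every map `g` on finite sequences in `K` with at
most `lam` values, some injective copy of `W` in `K` makes `g` on increasing sequences factor
through `f`. -/
def IsFinitelyReflected {I : Type u} [LinearOrder I] {Col : Type v} (f : List I → Col)
    (K : Type w) (lam : Cardinal.{w}) : Prop :=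
  ∀ (D : Type w) (g : List K → D) (W : Finset I), #D ≤ lam → ∃ x : I → K, Set.InjOn x W ∧
    ∀ w w' : List I, w.Pairwise (· < ·) → w'.Pairwise (· < ·) → (∀ a ∈ w, a ∈ W) →
      (∀ a ∈ w', a ∈ W) → f w = f w' → g (w.map x) = g (w'.map x)

theorem TreeFiltration.isFinitelyReflected_colour {I N : Type u} [LinearOrder I]
    [WellFoundedLT I] [LinearOrder N] [WellFoundedLT N] [Nonempty N] {κ : Cardinal.{u}}
    (X : TreeFiltration I N κ) {K : Type w} {lam : Cardinal.{w}} (hlam : ℵ₀ ≤ lam)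
    (hK : lam < #K) : IsFinitelyReflected X.colour K lam := by
  intro D g W hD
  obtain ⟨n, hn⟩ := X.exists_forall_rel W
  have : Nonempty K := mk_ne_zero_iff.1 hK.bot_lt.ne'
  let l := Filter.cocardinal K (isRegular_succ hlam)
  have : CardinalInterFilter l (Order.succ lam) := inferInstance
  have hl : l ≤ Filter.cofinite := fun s hs =>
    Filter.mem_cocardinal.2 (hs.lt_aleph0.trans_le (hlam.trans (Order.le_succ lam)))
  have : l.NeBot :=
    (Filter.frequently_true_iff_neBot l).1 (Filter.frequently_cocardinal.2 (by simpa using hK))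
  obtain ⟨p, hp⟩ := exists_frequently_predicts (l := l) (Order.lt_succ_iff.2 hD) X g n
    (W.image (X.rep n)) fun _ => Classical.arbitrary K
  obtain ⟨y, hy, hinj⟩ :=
    (hp.and_eventually (eventually_iterFilter_injOn hl (Finset.sort_nodup _ _) _)).exists
  have hrep : Set.InjOn (X.rep n) W := fun a ha b hb hab => by
    rcases le_total a b with h | h
    · exact eq_of_rep_eq_rep hab (hn a ha b hb h) (X.refl n b)
    · exact eq_of_rep_eq_rep hab (X.refl n a) (hn b hb a ha h)
  refine ⟨y ∘ X.rep n, hinj.comp hrep fun a ha => ?_, fun w w' hw hw' hwW hwW' hc => ?_⟩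
  · simpa using ⟨a, ha, rfl⟩
  have hval {w : List I} (hw : w.Pairwise (· < ·)) (hwW : ∀ a ∈ w, a ∈ W) :
      g (w.map (y ∘ X.rep n)) = p (X.colour w) := by
    have hwn := hw.imp_of_mem fun ha hb h => hn _ (hwW _ ha) _ (hwW _ hb) h.le
    exact hy w hw hwn (fun a ha => Finset.mem_image_of_mem _ (hwW a ha)) ((isLeast_level hwn).2 hwn)
  rw [hval hw hwW, hval hw' hwW', hc]

theorem exists_isFinitelyReflected {κ : Cardinal.{u}} (hκ : ℵ₀ ≤ κ) (hpow : κ ^< κ = κ) :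
    ∃ (I Col : Type u) (_ : LinearOrder I) (f : List I → Col), #I = Order.succ κ ∧ #Col ≤ κ ∧
      ∀ (K : Type w) (lam : Cardinal.{w}), ℵ₀ ≤ lam → lam < #K → IsFinitelyReflected f K lam := by
  obtain ⟨X⟩ := exists_treeFiltration (isRegular_of_powerlt_self hκ hpow)
  have : Nonempty κ.ord.ToType := by
    simpa [← mk_ne_zero_iff] using (aleph0_pos.trans_le hκ).ne'
  have hIic : ∀ n : κ.ord.ToType, #(Set.Iic n) < κ := fun n => by
    simpa using mk_Iic_lt n (by simp) (by simpa using hκ)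
  refine ⟨_, Set.range X.colour, inferInstance, Set.rangeFactorization X.colour, mk_ord_toType _,
    X.mk_range_colour_le hκ hpow (by simp) hIic, fun K lam hlam hK D g W hD => ?_⟩
  obtain ⟨x, hx, hg⟩ := X.isFinitelyReflected_colour hlam hK D g W hD
  exact ⟨x, hx, fun w w' hw hw' hwW hwW' h => hg w w' hw hw' hwW hwW' (congrArg Subtype.val h)⟩

/-! ### Skolem hulls in ultrapowers -/

section SkolemHull

open Filter Structure

variable {M : Type w} {J : Type u}

/-- The class of a family `f : J → M` in the ultrapower of `M` by `U`. -/
def ultrapowerMk (U : Ultrafilter J) (f : J → M) : (U : Filter J).Product fun _ => M := f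

theorem ultrapowerMk_eq_iff {U : Ultrafilter J} {f g : J → M} :
    ultrapowerMk U f = ultrapowerMk U g ↔ ∀ᶠ j in (U : Filter J), f j = g j :=
  Quotient.eq''

variable {L : FirstOrder.Language.{a, b}} [L.Structure M] [Nonempty M] {V : Type v}

theorem realize_snoc_ultrapowerMk_iff {U : Ultrafilter J} {n : ℕ}
    (φ : L.BoundedFormula Empty (n + 1)) (x : Fin n → J → M) (f : J → M) :
    φ.Realize default (Fin.snoc (fun i => ultrapowerMk U (x i)) (ultrapowerMk U f) :
        _ → (U : Filter J).Product fun _ => M) ↔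
      ∀ᶠ j in (U : Filter J), φ.Realize default (Fin.snoc (fun i => x i j) (f j) : _ → M) := by
  have hcast : (Fin.snoc (fun i => ultrapowerMk U (x i)) (ultrapowerMk U f) :
      Fin (n + 1) → (U : Filter J).Product fun _ => M) =
      fun i => ultrapowerMk U ((Fin.snoc x f : Fin (n + 1) → J → M) i) :=
    (Fin.comp_snoc (ultrapowerMk U) x f).symm
  have heval (j : J) : Fin.snoc (fun i => x i j) (f j) =
      fun i => (Fin.snoc x f : Fin (n + 1) → J → M) i j :=
    (Fin.comp_snoc (fun g : J → M => g j) x f).symm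
  have hparam : (default : Empty → (U : Filter J).Product fun _ => M) =
      fun e => ultrapowerMk U (e.elim : J → M) := Subsingleton.elim _ _
  have hparam' (j : J) : (default : Empty → M) = fun e => (e.elim : J → M) j :=
    Subsingleton.elim _ _
  rw [hcast, hparam]
  refine (Ultraproduct.boundedFormula_realize_cast φ (fun e => (e.elim : J → M)) _).trans ?_
  simp only [heval, ← hparam']

/-- Terms with variables in `V` in the expansion of `L` by Skolem functions. A single step of this
expansion suffices, because terms may nest the Skolem functions of `L`-formulas. -/
abbrev SkolemTerm (L : FirstOrder.Language.{a, b}) (V : Type v) : Type max a b v :=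
  (L.sum L.skolem₁).Term V

variable (U : Ultrafilter J) (val : J → V → M)

/-- The value of a Skolem term at the elements of the ultrapower coded by `val`. -/
noncomputable def skolemValue (t : SkolemTerm L V) : (U : Filter J).Product fun _ => M :=
  ultrapowerMk U fun j => t.realize (val j)

/-- The set of values of Skolem terms in the ultrapower. The Skolem functions are those of `M`,
extended pointwise. -/
def skolemSubstructure : L.Substructure ((U : Filter J).Product fun _ => M) where
  carrier := Set.range (skolemValue (L := L) U val)
  fun_mem f x hx := by
    choose ts hts using hx
    obtain rfl := funext hts
    exact ⟨.func (.inl f) ts, (Ultraproduct.funMap_cast f fun i j => (ts i).realize (val j)).symm⟩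

theorem isElementary_skolemSubstructure :
    (skolemSubstructure (L := L) U val).IsElementary := by
  refine Substructure.isElementary_of_exists _ fun n φ x y hy => ?_
  choose ts hts using fun i => (x i).2
  rw [show Subtype.val ∘ x = _ from funext fun i => (hts i).symm] at hy ⊢
  obtain ⟨f, rfl⟩ := Quotient.exists_rep y
  refine ⟨⟨_, .func (.inr φ) ts, rfl⟩, (realize_snoc_ultrapowerMk_iff φ _ _).2 ?_⟩
  filter_upwards [(realize_snoc_ultrapowerMk_iff φ _ f).1 hy] with j hj
  exact Classical.epsilon_spec (p := fun z => φ.Realize default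
    (Fin.snoc (fun i => (ts i).realize (val j)) z : _ → M)) ⟨_, hj⟩

instance small_skolemSubstructure : Small.{max a b v} (skolemSubstructure (L := L) U val) :=
  small_range (skolemValue (L := L) U val)

variable (L) in
/-- The Skolem hull of the elements of the ultrapower of `M` coded by `val`, in the universe of
the Skolem terms. -/
def SkolemHull : Type (max a b v) := Shrink.{max a b v} (skolemSubstructure (L := L) U val)

namespace SkolemHull

noncomputable instance : L.Structure (SkolemHull L U val) :=
  (equivShrink (skolemSubstructure (L := L) U val)).inducedStructure

/-- The element of the Skolem hull named by a Skolem term. -/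
noncomputable def mk (t : SkolemTerm L V) : SkolemHull L U val :=
  equivShrink _ ⟨skolemValue U val t, t, rfl⟩

variable {U val}

theorem mk_surjective : Function.Surjective (mk (L := L) U val) := fun z => by
  obtain ⟨⟨_, t, rfl⟩, rfl⟩ := (equivShrink _).surjective z
  exact ⟨t, rfl⟩

theorem mk_eq_mk_iff {t t' : SkolemTerm L V} : mk U val t = mk U val t' ↔
    ∀ᶠ j in (U : Filter J), t.realize (val j) = t'.realize (val j) :=
  (equivShrink _).injective.eq_iff.trans (Subtype.ext_iff.trans ultrapowerMk_eq_iff)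

theorem relMap_mk {n : ℕ} (r : L.Relations n) (ts : Fin n → SkolemTerm L V) :
    RelMap r (fun i => mk U val (ts i)) ↔
      ∀ᶠ j in (U : Filter J), RelMap r fun i => (ts i).realize (val j) := by
  have hsymm : (equivShrink _).symm ∘ (fun i => mk U val (ts i)) =
      fun i => (⟨skolemValue U val (ts i), ts i, rfl⟩ : skolemSubstructure (L := L) U val) :=
    funext fun i => (equivShrink _).symm_apply_apply _
  change RelMap r ((equivShrink _).symm ∘ fun i => mk U val (ts i)) ↔ _
  rw [hsymm]
  exact relMap_quotient_mk' (s := (U : Filter J).productSetoid _)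
    (ps := Ultraproduct.setoidPrestructure _ U) r _

theorem relMap_mk_unary (P : L.Relations 1) (t : SkolemTerm L V) :
    RelMap P ![mk U val t] ↔ ∀ᶠ j in (U : Filter J), RelMap P ![t.realize (val j)] := by
  simpa only [Matrix.vec_single_eq_const] using relMap_mk P fun _ => t

theorem elementarilyEquivalent : M ≅[L] SkolemHull L U val := by
  have hM : M ≅[L] (U : Filter J).Product fun _ => M :=
    elementarilyEquivalent_iff.2 fun φ => by simp [Ultraproduct.sentence_realize]
  have hS : skolemSubstructure (L := L) U val ≅[L] (U : Filter J).Product fun _ => M :=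
    (⟨_, isElementary_skolemSubstructure U val⟩ :
      L.ElementarySubstructure ((U : Filter J).Product fun _ => M)).elementarilyEquivalent
  let e : skolemSubstructure (L := L) U val ≃[L] SkolemHull L U val :=
    (equivShrink _).inducedStructureEquiv
  exact hM.trans (hS.symm.trans e.toElementaryEmbedding.elementarilyEquivalent)

end SkolemHull

end SkolemHull

/-! ### Shapes of terms and finite approximations -/

section Shape

variable {L : FirstOrder.Language.{a, b}} {I : Type u} [LinearOrder I] {C : Type v} {M : Type w}

/-- The variables of `t` in `I`, in increasing order. -/
def leftVars (t : L.Term (I ⊕ C)) : List I := t.varFinsetLeft.sort (· ≤ ·)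

theorem mem_leftVars {t : L.Term (I ⊕ C)} {i : I} : i ∈ leftVars t ↔ i ∈ t.varFinsetLeft :=
  Finset.mem_sort _

theorem pairwise_leftVars (t : L.Term (I ⊕ C)) : (leftVars t).Pairwise (· < ·) :=
  (Finset.sortedLT_sort _).pairwise

/-- The term obtained from `t` by replacing each variable in `I` by its index in `leftVars t`. -/
def pattern (t : L.Term (I ⊕ C)) : L.Term (ℕ ⊕ C) :=
  t.restrictVarLeft fun i => (leftVars t).idxOf i.1

theorem realize_pattern [L.Structure M] (t : L.Term (I ⊕ C)) (x : I → M) (c : C → M) (d : M) :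
    (pattern t).realize (Sum.elim (fun k => ((leftVars t).map x).getD k d) c) =
      t.realize (Sum.elim x c) := by
  refine Term.realize_restrictVarLeft x fun i => ?_
  have hi : (leftVars t).idxOf i.1 < (leftVars t).length :=
    List.idxOf_lt_length_of_mem (mem_leftVars.2 i.2)
  rw [Sum.elim_inl, List.getD_eq_getElem _ _ (by simpa using hi), List.getElem_map,
    List.getElem_idxOf]

/-- The pattern of a term together with the colour of its increasing sequence of variables. -/
def shape {Col : Type*} (f : List I → Col) (t : L.Term (I ⊕ C)) : L.Term (ℕ ⊕ C) × Col :=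
  (pattern t, f (leftVars t))

/-- As far as the finite set `Ts` of terms can see, the assignment `v` to the variables in `I ⊕ C`
is injective on `I` and on `C`, takes `C` into `p`, and makes the value of a term, if in `p`,
depend only on the shape of the term. -/
structure IsApproximation [L.Structure M] {Col : Type*} (f : List I → Col) (p : Set M)
    (Ts : Finset (L.Term (I ⊕ C))) (v : I ⊕ C → M) : Prop where
  injOn_inl : Set.InjOn (v ∘ Sum.inl) {i | .var (.inl i) ∈ Ts}
  injOn_inr : Set.InjOn (v ∘ Sum.inr) {c | .var (.inr c) ∈ Ts}
  inr_mem : ∀ c, v (.inr c) ∈ p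
  realize_eq : ∀ t ∈ Ts, ∀ t' ∈ Ts, shape f t = shape f t' → t.realize v ∈ p →
    t'.realize v ∈ p → t.realize v = t'.realize v

theorem exists_isApproximation [L.Structure M] {Col : Type*} {f : List I → Col} {p : Set M}
    (hp : ℵ₀ ≤ #p) (hf : IsFinitelyReflected f M #p) (Ts : Finset (L.Term (I ⊕ C))) :
    ∃ v, IsApproximation f p Ts v := by
  classical
  have : Infinite p := infinite_iff.2 hp
  let d : p := Classical.arbitrary p
  have : Nonempty M := ⟨d⟩
  have hfin : {i : C | .var (.inr i) ∈ Ts}.Finite :=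
    Ts.finite_toSet.preimage (f := fun i => (.var (.inr i) : L.Term (I ⊕ C)))
      fun i _ j _ h => by simpa using h
  obtain ⟨c, -, hc⟩ := hfin.exists_injOn_of_encard_le (t := (Set.univ : Set p)) (by simp)
  let eval (l : List M) (s : L.Term (ℕ ⊕ C)) : M :=
    s.realize (Sum.elim (fun k => l.getD k d) fun i => c i)
  let g (l : List M) : List p :=
    Ts.toList.map fun t => Function.invFun Subtype.val (eval l (pattern t))
  obtain ⟨x, hx, hg⟩ := hf (List p) g (Ts.biUnion Term.varFinsetLeft) (mk_list_eq_mk p).le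
  refine ⟨Sum.elim x fun i => c i, fun i hi j hj h => ?_, fun i hi j hj h => ?_, fun i => (c i).2,
    fun t ht t' ht' hshape hmem hmem' => ?_⟩
  · exact hx (Finset.mem_biUnion.2 ⟨_, hi, by simp [Term.varFinsetLeft]⟩)
      (Finset.mem_biUnion.2 ⟨_, hj, by simp [Term.varFinsetLeft]⟩) h
  · exact hc hi hj (Subtype.ext h)
  · obtain ⟨hpat, hcol⟩ := Prod.ext_iff.1 hshape
    have hW {t} (ht : t ∈ Ts) : ∀ i ∈ leftVars t, i ∈ Ts.biUnion Term.varFinsetLeft :=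
      fun i hi => Finset.mem_biUnion.2 ⟨t, ht, mem_leftVars.1 hi⟩
    have hgt := hg _ _ (pairwise_leftVars t) (pairwise_leftVars t') (hW ht) (hW ht') hcol
    have hval := List.map_inj_left.1 hgt t (Finset.mem_toList.2 ht)
    have hinv {m : M} (hm : m ∈ p) : (Function.invFun Subtype.val m : p) = m :=
      Function.invFun_eq (f := Subtype.val) ⟨⟨m, hm⟩, rfl⟩
    have heval (t : L.Term (I ⊕ C)) : eval ((leftVars t).map x) (pattern t) = t.realize _ :=
      realize_pattern t x _ _
    rw [heval t, show pattern t = pattern t' from hpat, heval t'] at hval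
    rw [← hinv hmem, ← hinv hmem', hval]

end Shape

/-! ### The two-cardinal theorem for small languages -/

section SmallLanguage

open Structure

variable {L : FirstOrder.Language.{a, b}}

theorem mk_skolemTerm_le {κ : Cardinal.{max a b}} (hκ : ℵ₀ ≤ κ) (hL : L.card ≤ κ)
    {V : Type max a b} (hV : #V ≤ κ) : #(SkolemTerm L V) ≤ κ := by
  have hfun : #(Σ n, (L.sum L.skolem₁).Functions n) ≤ κ :=
    card_functions_sum_skolem₁_le.trans (max_le hκ hL)
  refine Term.card_le.trans (max_le hκ ?_)
  simpa using add_le_of_le hκ hV hfun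

theorem eventually_mem_of_le_atTop {α : Type*} {l : Filter (Finset α)} (hl : l ≤ Filter.atTop)
    (i : α) : ∀ᶠ s in l, i ∈ s :=
  hl ((Filter.eventually_ge_atTop {i}).mono fun _ h => by simpa using h)

section Hull

variable {M : Type w} [L.Structure M] [Nonempty M] {I : Type u} [LinearOrder I] {C : Type v}
  {Col : Type*} {f : List I → Col} {P : L.Relations 1}
  {U : Ultrafilter (Finset (SkolemTerm L (I ⊕ C)))}
  {val : Finset (SkolemTerm L (I ⊕ C)) → I ⊕ C → M}
  (hval : ∀ Ts, IsApproximation f {x | RelMap P ![x]} Ts (val Ts))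
  (hU : (U : Filter (Finset (SkolemTerm L (I ⊕ C)))) ≤ Filter.atTop)

include hval

theorem relMap_mk_inr (c : C) : RelMap P ![SkolemHull.mk (L := L) U val (.var (.inr c))] :=
  (SkolemHull.relMap_mk_unary P _).2 (.of_forall fun Ts => (hval Ts).inr_mem c)

include hU

theorem mk_var_inl_injective :
    Function.Injective fun i => SkolemHull.mk (L := L) U val (.var (.inl i)) := fun i j h => by
  obtain ⟨Ts, h, hi, hj⟩ := ((SkolemHull.mk_eq_mk_iff.1 h).and
    ((eventually_mem_of_le_atTop hU _).and (eventually_mem_of_le_atTop hU _))).exists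
  exact (hval Ts).injOn_inl hi hj h

theorem mk_var_inr_injective :
    Function.Injective fun c => SkolemHull.mk (L := L) U val (.var (.inr c)) := fun c d h => by
  obtain ⟨Ts, h, hc, hd⟩ := ((SkolemHull.mk_eq_mk_iff.1 h).and
    ((eventually_mem_of_le_atTop hU _).and (eventually_mem_of_le_atTop hU _))).exists
  exact (hval Ts).injOn_inr hc hd h

theorem mk_eq_mk_of_shape_eq {t t' : SkolemTerm L (I ⊕ C)}
    (ht : RelMap P ![SkolemHull.mk U val t]) (ht' : RelMap P ![SkolemHull.mk U val t'])
    (h : shape f t = shape f t') : SkolemHull.mk U val t = SkolemHull.mk U val t' := by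
  refine SkolemHull.mk_eq_mk_iff.2 ?_
  filter_upwards [(SkolemHull.relMap_mk_unary P t).1 ht, (SkolemHull.relMap_mk_unary P t').1 ht',
    eventually_mem_of_le_atTop hU t, eventually_mem_of_le_atTop hU t'] with Ts hP hP' hmem hmem'
  exact (hval Ts).realize_eq t hmem t' hmem' h hP hP'

theorem exists_injective_shape :
    ∃ s : {z : SkolemHull L U val // RelMap P ![z]} → SkolemTerm L (ℕ ⊕ C) × Col,
      Function.Injective s := by
  choose term hterm using SkolemHull.mk_surjective (L := L) (U := U) (val := val)
  refine ⟨fun z => shape f (term z), fun z z' h => Subtype.ext ?_⟩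
  rw [← hterm z, ← hterm z']
  exact mk_eq_mk_of_shape_eq hval hU ((hterm z).symm ▸ z.2) ((hterm z').symm ▸ z'.2) h

end Hull

theorem exists_elementarilyEquivalent_mk_eq {κ : Cardinal.{max a b}} (hκ : ℵ₀ ≤ κ)
    (hpow : κ ^< κ = κ) (hL : L.card ≤ κ) (P : L.Relations 1) {M : Type w} [L.Structure M]
    (hP : ℵ₀ ≤ #{x : M // RelMap P ![x]}) (hPM : #{x : M // RelMap P ![x]} < #M) :
    ∃ (N : Type (max a b)) (_ : L.Structure N), (M ≅[L] N) ∧ #N = Order.succ κ ∧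
      #{x : N // RelMap P ![x]} = κ := by
  obtain ⟨I, Col, _, f, hI, hCol, hf⟩ := exists_isFinitelyReflected.{max a b, w} hκ hpow
  have : Nonempty M := mk_ne_zero_iff.1 hPM.bot_lt.ne'
  let C : Type (max a b) := κ.ord.ToType
  have hC : #C = κ := mk_ord_toType κ
  let U := Ultrafilter.of (Filter.atTop : Filter (Finset (SkolemTerm L (I ⊕ C))))
  have hU : (U : Filter (Finset (SkolemTerm L (I ⊕ C)))) ≤ Filter.atTop := Ultrafilter.of_le _
  choose val hval using exists_isApproximation (L := L.sum L.skolem₁) (C := C)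
    (p := {x | RelMap P ![x]}) hP (hf M _ hP hPM)
  have hκ' : ℵ₀ ≤ Order.succ κ := hκ.trans (Order.le_succ κ)
  refine ⟨SkolemHull L U val, inferInstance, SkolemHull.elementarilyEquivalent,
    le_antisymm ?_ ?_, le_antisymm ?_ ?_⟩
  · refine (mk_le_of_surjective SkolemHull.mk_surjective).trans
      (mk_skolemTerm_le hκ' (hL.trans (Order.le_succ κ)) ?_)
    simpa [hI, hC] using add_le_of_le hκ' le_rfl (Order.le_succ κ)
  · exact hI.symm.trans_le (mk_le_of_injective (mk_var_inl_injective hval hU))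
  · obtain ⟨s, hs⟩ := exists_injective_shape hval hU
    refine (mk_le_of_injective hs).trans ?_
    have hterm : #(SkolemTerm L (ℕ ⊕ C)) ≤ κ :=
      mk_skolemTerm_le hκ hL (by simpa [hC] using add_le_of_le hκ hκ le_rfl)
    simpa using mul_le_of_le hκ hterm hCol
  · let c (i : C) : {z : SkolemHull L U val // RelMap P ![z]} := ⟨_, relMap_mk_inr hval i⟩
    have hc : Function.Injective c := fun i j h =>
      mk_var_inr_injective hval hU (congrArg Subtype.val h)
    exact hC.symm.trans_le (mk_le_of_injective hc)

end SmallLanguage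

/-! ### Sublanguages -/

section Sublanguage

variable {L : FirstOrder.Language.{a, b}} {α : Type u} {n : ℕ} {A : Set L.Symbols}

/-- The sublanguage of `L` whose symbols are those in `A`. -/
def sublanguage (A : Set L.Symbols) : FirstOrder.Language.{a, b} where
  Functions n := {f : L.Functions n // .inl ⟨n, f⟩ ∈ A}
  Relations n := {r : L.Relations n // .inr ⟨n, r⟩ ∈ A}

/-- The inclusion of a sublanguage. -/
def sublanguageInclusion (A : Set L.Symbols) : sublanguage A →ᴸ L where
  onFunction _ f := f.1
  onRelation _ r := r.1

theorem sublanguageInclusion_injective (A : Set L.Symbols) : (sublanguageInclusion A).Injective :=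
  ⟨fun {_} _ _ h => Subtype.ext h, fun {_} _ _ h => Subtype.ext h⟩

theorem card_sublanguage_le (A : Set L.Symbols) : (sublanguage A).card ≤ #A := by
  let s : (sublanguage A).Symbols → L.Symbols :=
    Sum.map (Sigma.map id fun _ => Subtype.val) (Sigma.map id fun _ => Subtype.val)
  have hs : Function.Injective s :=
    Sum.map_injective.2 ⟨Function.injective_id.sigma_map fun _ => Subtype.val_injective,
      Function.injective_id.sigma_map fun _ => Subtype.val_injective⟩
  have hmem : ∀ x, s x ∈ A
    | .inl ⟨_, f⟩ => f.2
    | .inr ⟨_, r⟩ => r.2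
  exact mk_le_of_injective (f := fun x => (⟨s x, hmem x⟩ : A)) fun x y h =>
    hs (congrArg Subtype.val h)

/-- The function symbols occurring in a term, as a set of symbols of `L`. -/
def termSymbols : L.Term α → Set L.Symbols
  | .var _ => ∅
  | .func f ts => insert (.inl ⟨_, f⟩) (⋃ i, termSymbols (ts i))

/-- The function and relation symbols occurring in a formula. -/
def formulaSymbols {n : ℕ} : L.BoundedFormula α n → Set L.Symbols
  | .falsum => ∅
  | .equal t₁ t₂ => termSymbols t₁ ∪ termSymbols t₂
  | .rel r ts => insert (.inr ⟨_, r⟩) (⋃ i, termSymbols (ts i))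
  | .imp φ ψ => formulaSymbols φ ∪ formulaSymbols ψ
  | .all φ => formulaSymbols φ

theorem finite_termSymbols (t : L.Term α) : (termSymbols t).Finite := by
  induction t with
  | var => exact Set.finite_empty
  | func f ts ih => exact (Set.finite_iUnion ih).insert _

theorem finite_formulaSymbols (φ : L.BoundedFormula α n) : (formulaSymbols φ).Finite := by
  induction φ with
  | falsum => exact Set.finite_empty
  | equal t₁ t₂ => exact (finite_termSymbols t₁).union (finite_termSymbols t₂)
  | rel r ts => exact (Set.finite_iUnion fun i => finite_termSymbols (ts i)).insert _
  | imp φ ψ ihφ ihψ => exact ihφ.union ihψ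
  | all _ ih => exact ih

theorem exists_onTerm_eq {t : L.Term α} (ht : termSymbols t ⊆ A) :
    ∃ t', (sublanguageInclusion A).onTerm t' = t := by
  induction t with
  | var i => exact ⟨.var i, rfl⟩
  | func f ts ih =>
    obtain ⟨hf, hts⟩ := Set.insert_subset_iff.1 ht
    choose ts' hts' using fun i => ih i ((Set.subset_iUnion _ i).trans hts)
    exact ⟨.func ⟨f, hf⟩ ts', congrArg (Term.func f) (funext hts')⟩

theorem exists_onBoundedFormula_eq {φ : L.BoundedFormula α n} (hφ : formulaSymbols φ ⊆ A) :
    ∃ φ', (sublanguageInclusion A).onBoundedFormula φ' = φ := by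
  induction φ with
  | falsum => exact ⟨.falsum, rfl⟩
  | equal t₁ t₂ =>
    obtain ⟨h₁, h₂⟩ := Set.union_subset_iff.1 hφ
    obtain ⟨t₁', rfl⟩ := exists_onTerm_eq h₁
    obtain ⟨t₂', rfl⟩ := exists_onTerm_eq h₂
    exact ⟨.equal t₁' t₂', rfl⟩
  | rel r ts =>
    obtain ⟨hr, hts⟩ := Set.insert_subset_iff.1 hφ
    choose ts' hts' using fun i =>
      exists_onTerm_eq ((Set.subset_iUnion (fun i => termSymbols (ts i)) i).trans hts)
    exact ⟨.rel ⟨r, hr⟩ ts', congrArg (BoundedFormula.rel r) (funext hts')⟩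
  | imp φ ψ ihφ ihψ =>
    obtain ⟨hφ, hψ⟩ := Set.union_subset_iff.1 hφ
    obtain ⟨φ', rfl⟩ := ihφ hφ
    obtain ⟨ψ', rfl⟩ := ihψ hψ
    exact ⟨φ'.imp ψ', rfl⟩
  | all φ ih =>
    obtain ⟨φ', rfl⟩ := ih hφ
    exact ⟨φ'.all, rfl⟩

theorem exists_isExpansionOn_realize_iff {M : Type v} {N : Type w} [L.Structure M]
    [(sublanguage A).Structure M] [(sublanguageInclusion A).IsExpansionOn M] [Nonempty N]
    [(sublanguage A).Structure N] (hMN : M ≅[sublanguage A] N) :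
    ∃ _ : L.Structure N, (sublanguageInclusion A).IsExpansionOn N ∧
      ∀ φ : L.Sentence, formulaSymbols φ ⊆ A → (M ⊨ φ ↔ N ⊨ φ) := by
  classical
  let _ : Inhabited N := ⟨Classical.arbitrary N⟩
  let _ : L.Structure N := (sublanguageInclusion A).defaultExpansion N
  have : (sublanguageInclusion A).IsExpansionOn N :=
    (sublanguageInclusion_injective A).isExpansionOn_default N
  refine ⟨inferInstance, this, fun φ hφ => ?_⟩
  obtain ⟨φ', rfl⟩ := exists_onBoundedFormula_eq hφ
  exact (LHom.realize_onSentence M (sublanguageInclusion A) φ').trans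
    ((elementarilyEquivalent_iff.1 hMN φ').trans
      (LHom.realize_onSentence N (sublanguageInclusion A) φ').symm)

theorem mk_iUnion_formulaSymbols_le {κ : Cardinal.{max a b}} (hκ : ℵ₀ ≤ κ) {T : L.Theory}
    (hT : #T ≤ κ) : #(⋃ φ ∈ T, formulaSymbols φ : Set L.Symbols) ≤ κ := by
  rw [Set.biUnion_eq_iUnion]
  have hfin (φ : T) : #(formulaSymbols φ.1) ≤ κ := (finite_formulaSymbols φ.1).lt_aleph0.le.trans hκ
  refine (mk_iUnion_le_sum_mk.trans (sum_le_sum _ (fun _ => κ) hfin)).trans ?_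
  simpa using mul_le_of_le hκ hT le_rfl

end Sublanguage

end TwoCardinal

open TwoCardinal in
theorem chang_two_cardinal_general (L : FirstOrder.Language)
    (mu : Cardinal) (hmu : ℵ₀ ≤ mu) (hmupow : mu ^< mu = mu)
    (P : L.Relations 1) (T : L.Theory) (hT : #T ≤ mu) (M : T.ModelType)
    (hP : ℵ₀ ≤ #{x : M // Structure.RelMap P ![x]})
    (hPM : #{x : M // Structure.RelMap P ![x]} < #M) :
    ∃ N : T.ModelType, #N = Order.succ mu ∧ #{x : N // Structure.RelMap P ![x]} = mu := by
  let A : Set L.Symbols := insert (.inr ⟨1, P⟩) (⋃ φ ∈ T, formulaSymbols φ)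
  have hA : #A ≤ mu := mk_insert_le.trans
    (add_le_of_le hmu (mk_iUnion_formulaSymbols_le hmu hT) (one_le_aleph0.trans hmu))
  have hTA : ∀ φ ∈ T, formulaSymbols φ ⊆ A := fun φ hφ =>
    (Set.subset_biUnion_of_mem hφ).trans (Set.subset_insert _ _)
  let P' : (sublanguage A).Relations 1 := ⟨P, Set.mem_insert _ _⟩
  let _ : (sublanguage A).Structure M := (sublanguageInclusion A).reduct M
  obtain ⟨N, _, hMN, hN, hPN⟩ := exists_elementarilyEquivalent_mk_eq hmu hmupow
    ((card_sublanguage_le A).trans hA) P' (M := M) hP hPM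
  have : Nonempty N := mk_ne_zero_iff.1 (hN.trans_ne (Order.bot_lt_succ mu).ne')
  obtain ⟨_, hexp, hφ⟩ := exists_isExpansionOn_realize_iff hMN
  have : N ⊨ T := ⟨fun φ h => (hφ φ (hTA φ h)).1 (Theory.realize_sentence_of_mem T h)⟩
  refine ⟨Theory.ModelType.of T N, hN, ?_⟩
  have hP' (x : N) : Structure.RelMap P ![x] = Structure.RelMap P' ![x] :=
    hexp.map_onRelation P' ![x]
  exact (mk_congr (Equiv.subtypeEquivRight fun x => iff_of_eq (hP' x))).trans hPN

/-- Chang's two-cardinal theorem: if `μ = μ^{<μ}` is infinite and a theory `T` of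
cardinality `≤ μ`, in a language with a unary predicate `P`, has a model of cardinality
`λ⁺` in which `P` has cardinality `λ`, then `T` has a model of cardinality `μ⁺` in which
`P` has cardinality `μ`. -/
theorem chang_two_cardinal (L : FirstOrder.Language)
    (mu : Cardinal) (hmu : ℵ₀ ≤ mu) (hmupow : mu ^< mu = mu)
    (P : L.Relations 1) (T : L.Theory) (hT : Cardinal.mk T ≤ mu)
    (lam : Cardinal) (hlam : ℵ₀ ≤ lam)
    (M : T.ModelType)
    (hM : Cardinal.mk M = Order.succ lam)
    (hP : Cardinal.mk {x : M // Structure.RelMap P ![x]} = lam) :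
    ∃ N : T.ModelType,
      Cardinal.mk N = Order.succ mu ∧
      Cardinal.mk {x : N // Structure.RelMap P ![x]} = mu :=
  chang_two_cardinal_general L mu hmu hmupow P T hT M (hP.symm ▸ hlam)
    (by rw [hP, hM]; exact Order.lt_succ lam)
end
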